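/- arXiv:2110.07854 — 2 statements merged into one kernel-verified Lean document; each statement's English description precedes it below -/
import Mathlib

section
/- For every prime p, every real β > 0, and every f ∈ ℂ, the series Z(f, ℙ¹(ℚ_p), β), Z(pf/(p+1), ℤ_p, β), and Z(pf/(p+1), pℤ_p, β) converge absolutely and satisfy Z(f, ℙ¹(ℚ_p), β) = Z(pf/(p+1), ℤ_p, β) · Z(pf/(p+1), pℤ_p, β). -/
open MeasureTheory
open scoped LinearAlgebra.Projectivization

namespace LogCoulomb

noncomputable section

/-! ### The projective line over `ℚ_p`, its spherical metric and `PGL₂`-invariant measure -/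

variable (p : ℕ) [Fact p.Prime]

instance : MeasurableSpace ℚ_[p] := borel _
instance : BorelSpace ℚ_[p] := ⟨rfl⟩

/-- The projective line over `ℚ_p`. -/
abbrev P1 := ℙ ℚ_[p] (Fin 2 → ℚ_[p])

instance : TopologicalSpace (P1 p) :=
  inferInstanceAs (TopologicalSpace (Quotient _))

instance : MeasurableSpace (P1 p) := borel _
instance : BorelSpace (P1 p) := ⟨rfl⟩

/-- Spherical distance on homogeneous coordinates:
`δ((x₀,x₁),(y₀,y₁)) = |x₀y₁ - x₁y₀| / (max(|x₀|,|x₁|) ⬝ max(|y₀|,|y₁|))`. -/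
def sdelta (x y : Fin 2 → ℚ_[p]) : ℝ :=
  ‖x 0 * y 1 - x 1 * y 0‖ / (max ‖x 0‖ ‖x 1‖ * max ‖y 0‖ ‖y 1‖)

/-- The spherical metric on `ℙ¹(ℚ_p)`, defined via the canonical representatives. -/
def pdelta (ξ η : P1 p) : ℝ := sdelta p ξ.rep η.rep

open Classical in
/-- The action of a matrix on `ℙ¹(ℚ_p)`: `[x₀:x₁] ↦ [a x₀ + b x₁ : c x₀ + d x₁]`
(well-defined, and given by the first branch of the `if`, whenever `A` is invertible). -/
def mobius (A : Matrix (Fin 2) (Fin 2) ℚ_[p]) (ξ : P1 p) : P1 p :=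
  if h : A.mulVec ξ.rep ≠ 0 then Projectivization.mk ℚ_[p] (A.mulVec ξ.rep) h else ξ

/-- `ν` is invariant under the action of `GL₂(ℤ_p)` on `ℙ¹(ℚ_p)`; membership of the matrix
entries in `ℤ_p`, and invertibility of the matrix over `ℤ_p`, are phrased via the `p`-adic
norm on `ℚ_p`. -/
def IsGLInvariant (ν : Measure (P1 p)) : Prop :=
  ∀ A : Matrix (Fin 2) (Fin 2) ℚ_[p],
    (∀ i j, ‖A i j‖ ≤ 1) → ‖A.det‖ = 1 →
      ∀ M : Set (P1 p), MeasurableSet M → ν (mobius p A '' M) = ν M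

/-- The embedding `ι : ℚ_p → ℙ¹(ℚ_p)`, `x ↦ [x : 1]`. -/
def iota (x : ℚ_[p]) : P1 p :=
  Projectivization.mk ℚ_[p] ![x, 1] (by
    intro h
    have h1 := congrFun h 1
    simp at h1)

/-! ### Canonical partition functions -/

/-- The pairs `(i,j)` with `i < j`. -/
def pairs (N : ℕ) : Finset (Fin N × Fin N) := Finset.univ.filter fun q => q.1 < q.2

/-- The closed unit ball `ℤ_p = R` inside `ℚ_p`. -/
def Zball : Set ℚ_[p] := {x | ‖x‖ ≤ 1}

/-- The open unit ball `pℤ_p = P` inside `ℚ_p`. -/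
def Pball : Set ℚ_[p] := {x | ‖x‖ < 1}

/-- The one-component canonical partition function
`Z_N(X, β) = ∫_{X^N} ∏_{i<j} |x_i - x_j|^β dμ^N` (as a Bochner integral, whether or not it
converges absolutely). -/
def ZN (μ : Measure ℚ_[p]) [SigmaFinite μ] (X : Set ℚ_[p]) (N : ℕ) (β : ℂ) : ℂ :=
  ∫ x : Fin N → ℚ_[p], ∏ q ∈ pairs N, (‖x q.1 - x q.2‖ : ℂ) ^ β
    ∂(Measure.pi fun _ => μ.restrict X)

/-- The multivariate canonical partition function
`𝒵_I(X, s) = ∫_{X^I} ∏_{i<j, i,j ∈ I} |x_i - x_j|^{s_{ij}} dμ^I` for a subset `I ⊆ [N]`. -/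
def ZI (μ : Measure ℚ_[p]) [SigmaFinite μ] (X : Set ℚ_[p]) {N : ℕ} (I : Finset (Fin N))
    (s : Fin N → Fin N → ℂ) : ℂ :=
  ∫ x : I → ℚ_[p],
    ∏ q ∈ Finset.univ.filter (fun q : (↥I) × (↥I) => (q.1 : Fin N) < (q.2 : Fin N)),
      (‖x q.1 - x q.2‖ : ℂ) ^ s q.1.1 q.2.1
    ∂(Measure.pi fun _ => μ.restrict X)

/-- The multivariate canonical partition function
`𝒵_N(ℙ¹(ℚ_p), s) = ∫_{(ℙ¹(ℚ_p))^N} ∏_{i<j} δ(ξ_i,ξ_j)^{s_{ij}} dν^N`. -/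
def ZP1s (ν : Measure (P1 p)) [SigmaFinite ν] (N : ℕ) (s : Fin N → Fin N → ℂ) : ℂ :=
  ∫ x : Fin N → P1 p, ∏ q ∈ pairs N, ((pdelta p (x q.1) (x q.2) : ℝ) : ℂ) ^ s q.1 q.2
    ∂(Measure.pi fun _ => ν)

/-- The one-component canonical partition function `Z_N(ℙ¹(ℚ_p), β)`. -/
def ZP1 (ν : Measure (P1 p)) [SigmaFinite ν] (N : ℕ) (β : ℂ) : ℂ :=
  ∫ x : Fin N → P1 p, ∏ q ∈ pairs N, ((pdelta p (x q.1) (x q.2) : ℝ) : ℂ) ^ β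
    ∂(Measure.pi fun _ => ν)

/-! ### The quadratic recurrence -/

/-- The factor `ρ_{N,k}(t,β)` appearing in the quadratic recurrence; here
`N.choose 2 = N(N-1)/2`. -/
def rho (N k : ℕ) (t : ℝ) (β : ℂ) : ℂ :=
  if t = 0 then
    (((N : ℂ) + (N.choose 2 : ℂ) * β) * (1 - 2 * (k : ℂ) / (N : ℂ)) + 1) /
      (((N : ℂ) + (N.choose 2 : ℂ) * β) - 1)
  else
    Complex.sinh (((t : ℂ) / 2) * (((N : ℂ) + (N.choose 2 : ℂ) * β) * (1 - 2 * (k : ℂ) / (N : ℂ)) + 1)) /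
      Complex.sinh (((t : ℂ) / 2) * (((N : ℂ) + (N.choose 2 : ℂ) * β) - 1))

/-- The quadratic recurrence: `F 0 = F 1 = 1` and
`F N t β = ∑_{k=1}^{N-1} (k/N) ρ_{N,k}(t,β) F_{N-k}(t,β) F_k(t,β)` for `N ≥ 2`. -/
def F : ℕ → ℝ → ℂ → ℂ
  | 0, _, _ => 1
  | 1, _, _ => 1
  | N + 2, t, β =>
    ∑ k ∈ (Finset.Icc 1 (N + 1)).attach,
      (((k : ℕ) : ℂ) / ((N : ℂ) + 2)) * rho (N + 2) k t β *
        F (N + 2 - (k : ℕ)) t β * F (k : ℕ) t β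
  decreasing_by
  all_goals
    have hk := Finset.mem_Icc.mp k.2
    omega

/-! ### Splitting chains -/

/-- A splitting chain `Λ_0 > Λ_1 > ⋯ > Λ_L` of set partitions of the subset `I ⊆ [N]`,
beginning with the trivial partition `{I}` and ending with the partition of `I` into
singletons.  (The values `Λ ℓ` for `ℓ > L` are required to be `∅`, so that a chain is
determined by the genuine data `Λ_0, …, Λ_L`.) -/
structure SplChain (N : ℕ) (I : Finset (Fin N)) where
  L : ℕ
  Λ : ℕ → Finset (Finset (Fin N))
  nonempty_mem : ∀ ℓ ≤ L, ∀ B ∈ Λ ℓ, B.Nonempty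
  subset_mem : ∀ ℓ ≤ L, ∀ B ∈ Λ ℓ, B ⊆ I
  cover : ∀ ℓ ≤ L, ∀ i ∈ I, ∃! B, B ∈ Λ ℓ ∧ i ∈ B
  first : Λ 0 = {I}
  last : Λ L = I.image fun i => {i}
  refines : ∀ ℓ < L, ∀ B ∈ Λ (ℓ + 1), ∃ C ∈ Λ ℓ, B ⊆ C
  strict : ∀ ℓ < L, Λ (ℓ + 1) ≠ Λ ℓ
  trailing : ∀ ℓ, L < ℓ → Λ ℓ = ∅

variable {N : ℕ} {I : Finset (Fin N)}

/-- The branches of a splitting chain: the non-singleton parts,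
`ℬ(𝔖) = (Λ_0 ∪ ⋯ ∪ Λ_{L-1}) \ Λ_L`. -/
def SplChain.branches (S : SplChain N I) : Finset (Finset (Fin N)) :=
  ((Finset.range S.L).biUnion S.Λ) \ S.Λ S.L

/-- The depth `ℓ_𝔖(λ) = max {ℓ : λ ∈ Λ_ℓ}` of a branch. -/
def SplChain.depth (S : SplChain N I) (lam : Finset (Fin N)) : ℕ :=
  ((Finset.range (S.L + 1)).filter fun ℓ => lam ∈ S.Λ ℓ).sup id

/-- The degree `deg_𝔖(λ) = #{λ' ∈ Λ_{ℓ_𝔖(λ)+1} : λ' ⊆ λ}` of a branch. -/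
def SplChain.degree (S : SplChain N I) (lam : Finset (Fin N)) : ℕ :=
  ((S.Λ (S.depth lam + 1)).filter fun lam' => lam' ⊆ lam).card

/-- A splitting chain is reduced if every branch appears in exactly one partition of the
chain (namely the one at its depth). -/
def SplChain.Reduced (S : SplChain N I) : Prop :=
  ∀ lam ∈ S.branches, ∀ ℓ ≤ S.L, (lam ∈ S.Λ ℓ ↔ ℓ = S.depth lam)

/-- `e_λ(s) = #λ - 1 + ∑_{i<j, i,j ∈ λ} s_{ij}`. -/
def eexp (lam : Finset (Fin N)) (s : Fin N → Fin N → ℂ) : ℂ :=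
  (lam.card : ℂ) - 1 + ∑ q ∈ (pairs N).filter fun q => q.1 ∈ lam ∧ q.2 ∈ lam, s q.1 q.2

/-- Membership in `Ω_I`: `Re e_λ(s) > 0` for every `λ ⊆ I` with `#λ > 1`. -/
def InOmega (I : Finset (Fin N)) (s : Fin N → Fin N → ℂ) : Prop :=
  ∀ lam ⊆ I, 1 < lam.card → 0 < (eexp lam s).re


/-- The multivariate canonical partition function `𝒵_N(ℤ_p, s)` over `Fin N`-indexed tuples. -/
def ZNs (μ : Measure ℚ_[p]) [SigmaFinite μ] (X : Set ℚ_[p]) (N : ℕ)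
    (s : Fin N → Fin N → ℂ) : ℂ :=
  ∫ x : Fin N → ℚ_[p], ∏ q ∈ pairs N, (‖x q.1 - x q.2‖ : ℂ) ^ s q.1 q.2
    ∂(Measure.pi fun _ => μ.restrict X)

/-- The ball `p^v ℤ_p = {x : |x| ≤ p^{-v}}` in `ℚ_p`. -/
def pvball (v : ℤ) : Set ℚ_[p] := {x | ‖x‖ ≤ (p : ℝ) ^ (-v)}

/-- `G_N(q,β) = N! q^{(1/2)(N choose 2)β} F_N(log q, β)`. -/
def GN (N : ℕ) (β : ℂ) (q : ℝ) : ℂ :=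
  (N.factorial : ℂ) * (q : ℂ) ^ ((N.choose 2 : ℂ) * β / 2) * F N (Real.log q) β

/-- `H_N(q,β)`, the efficient formula for `Z_N(ℙ¹(K),β)` as a function of `q`. -/
def HN (N : ℕ) (β : ℂ) (q : ℝ) : ℂ :=
  (N.factorial : ℂ) * ∑ k ∈ Finset.range (N + 1),
    Complex.cosh (((Real.log q : ℂ) / 2) * ((N : ℂ) + (N.choose 2 : ℂ) * β) *
          (1 - 2 * (k : ℂ) / (N : ℂ))) /
        (2 * Complex.cosh ((Real.log q : ℂ) / 2)) ^ N *
      F (N - k) (Real.log q) β * F k (Real.log q) β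

end

section abstr

noncomputable def II {X : Type*} [MeasurableSpace X] (ι : Type) [Fintype ι] [LinearOrder ι]
    (m : Measure X) (g : X → X → ℂ) : ℂ :=
  ∫ x : ι → X, ∏ q ∈ Finset.univ.filter (fun q : ι × ι => q.1 < q.2), g (x q.1) (x q.2)
    ∂(Measure.pi fun _ => m)

theorem II_congr {X : Type*} [MeasurableSpace X] {ι κ : Type} [Fintype ι] [LinearOrder ι]
    [Fintype κ] [LinearOrder κ] (e : ι ≃o κ) (m : Measure X) [SigmaFinite m] (g : X → X → ℂ) :
    II ι m g = II κ m g := by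
  unfold II
  have h := measurePreserving_piCongrLeft (α := fun _ : κ => X) (fun _ : κ => m) e.toEquiv
  rw [← h.integral_comp (MeasurableEquiv.measurableEmbedding _)]
  refine integral_congr_ae (Filter.Eventually.of_forall fun x => ?_)
  refine Finset.prod_equiv (e.toEquiv.prodCongr e.toEquiv) ?_ ?_
  · intro q; simp
  · intro q _
    have : ∀ i, (MeasurableEquiv.piCongrLeft (fun _ : κ => X) e.toEquiv) x (e i) = x i := by
      intro i
      exact Equiv.piCongrLeft_apply_apply (P := fun _ : κ => X) e.toEquiv x i
    simp [this]

theorem meas_prod {X : Type*} [MeasurableSpace X] {ι : Type} (S : Finset (ι × ι))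
    (g : X → X → ℂ) (hg : Measurable (Function.uncurry g)) :
    Measurable fun x : ι → X => ∏ q ∈ S, g (x q.1) (x q.2) := by
  refine Finset.measurable_fun_prod _ fun q _ => ?_
  have h : Measurable fun x : ι → X => (x q.1, x q.2) :=
    (measurable_pi_apply q.1).prodMk (measurable_pi_apply q.2)
  exact hg.comp h

theorem II_smul {X : Type*} [MeasurableSpace X] (ι : Type) [Fintype ι] [LinearOrder ι]
    (m : Measure X) [IsFiniteMeasure m] (c : NNReal) (g : X → X → ℂ) :
    II ι (c • m) g = (c : ℂ) ^ Fintype.card ι * II ι m g := by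
  unfold II
  have : Measure.pi (fun _ : ι => c • m) = (c ^ Fintype.card ι) • Measure.pi (fun _ : ι => m) := by
    refine Measure.pi_eq fun s _ => ?_
    simp only [Measure.smul_apply, Measure.pi_pi, ENNReal.smul_def, smul_eq_mul,
      Finset.prod_mul_distrib, Finset.prod_const, Finset.card_univ, ENNReal.coe_pow]
  rw [this, integral_smul_nnreal_measure]
  simp [NNReal.smul_def]

theorem II_map {X Y : Type*} [MeasurableSpace X] [MeasurableSpace Y] (ι : Type) [Fintype ι]
    [LinearOrder ι]
    (m : Measure X) [IsFiniteMeasure m] (s : X → Y) (hs : Measurable s) (g : Y → Y → ℂ)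
    (hg : Measurable (Function.uncurry g)) :
    II ι (m.map s) g = II ι m (fun x y => g (s x) (s y)) := by
  unfold II
  have hf : IsFiniteMeasure (m.map s) := inferInstance
  rw [← Measure.pi_map_pi (fun _ => hs.aemeasurable), integral_map]
  · exact (measurable_pi_lambda _ fun i => hs.comp (measurable_pi_apply i)).aemeasurable
  · exact (meas_prod _ g hg).aestronglyMeasurable

theorem mem_pmap {ι : Type} [LinearOrder ι] (P : ι → Prop) [Fintype {i // P i}]
    (q : ι × ι) :
    q ∈ ((Finset.univ.filter (fun q : {i // P i} × {i // P i} => q.1 < q.2)).map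
        ((Function.Embedding.subtype _).prodMap (Function.Embedding.subtype _))) ↔
      q.1 < q.2 ∧ P q.1 ∧ P q.2 := by
  simp only [Finset.mem_map, Finset.mem_filter, Finset.mem_univ, true_and]
  constructor
  · rintro ⟨⟨a, b⟩, h, rfl⟩
    exact ⟨h, a.2, b.2⟩
  · rintro ⟨h, h1, h2⟩
    exact ⟨(⟨q.1, h1⟩, ⟨q.2, h2⟩), h, rfl⟩

theorem II_split {X : Type*} [MeasurableSpace X] (N : ℕ)
    (m : Measure X) [IsFiniteMeasure m] (A : Set X) (hA : MeasurableSet A) (g gA gB : X → X → ℂ)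
    (hg : Measurable (Function.uncurry g)) (hb : ∀ x y, ‖g x y‖ ≤ 1)
    (hAA : ∀ x ∈ A, ∀ y ∈ A, g x y = gA x y)
    (hBB : ∀ x ∉ A, ∀ y ∉ A, g x y = gB x y)
    (hAB : ∀ x ∈ A, ∀ y ∉ A, g x y = 1)
    (hBA : ∀ x ∉ A, ∀ y ∈ A, g x y = 1) :
    II (Fin N) m g = ∑ S : Finset (Fin N),
      II (Fin S.card) (m.restrict A) gA * II (Fin (N - S.card)) (m.restrict Aᶜ) gB := by
  classical
  set G : (Fin N → X) → ℂ := fun x =>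
    ∏ q ∈ Finset.univ.filter (fun q : Fin N × Fin N => q.1 < q.2), g (x q.1) (x q.2) with hG
  have hGm : Measurable G := meas_prod _ g hg
  have hGb : ∀ x, ‖G x‖ ≤ 1 := by
    intro x
    rw [hG]
    simp only [norm_prod]
    exact Finset.prod_le_one (fun _ _ => norm_nonneg _) (fun _ _ => hb _ _)
  have hGi : Integrable G (Measure.pi fun _ => m) :=
    Integrable.of_bound hGm.aestronglyMeasurable 1 (Filter.Eventually.of_forall hGb)
  let box : Finset (Fin N) → Set (Fin N → X) := fun S =>
    Set.pi Set.univ (fun i => if i ∈ S then A else Aᶜ)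
  have hboxmem : ∀ S x, x ∈ box S ↔ ∀ i, (x i ∈ A ↔ i ∈ S) := by
    intro S x
    simp only [box, Set.mem_pi, Set.mem_univ, true_imp_iff]
    refine forall_congr' fun i => ?_
    by_cases h : i ∈ S <;> simp [h]
  have hboxm : ∀ S, MeasurableSet (box S) := by
    intro S
    refine MeasurableSet.univ_pi fun i => ?_
    by_cases h : i ∈ S <;> simp [h, hA]
  have hun : (⋃ S ∈ (Finset.univ : Finset (Finset (Fin N))), box S) = Set.univ := by
    ext x
    simp only [Finset.mem_univ, Set.iUnion_true, Set.mem_iUnion, Set.mem_univ, iff_true]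
    refine ⟨Finset.univ.filter fun i => x i ∈ A, ?_⟩
    rw [hboxmem]; simp
  have e1 : II (Fin N) m g = ∑ S : Finset (Fin N), ∫ x in box S, G x ∂(Measure.pi fun _ => m) := by
    rw [← integral_biUnion_finset _ (fun S _ => hboxm S) ?_ (fun S _ => hGi.integrableOn), hun,
      setIntegral_univ]
    · rfl
    · intro S _ T _ hST
      refine Set.disjoint_left.2 fun x hx hy => hST ?_
      rw [hboxmem] at hx hy
      ext i
      rw [← hx i, hy i]
  rw [e1]
  refine Finset.sum_congr rfl fun S _ => ?_
  let GA : ({i // i ∈ S} → X) → ℂ := fun x =>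
    ∏ q ∈ Finset.univ.filter (fun q : {i // i ∈ S} × {i // i ∈ S} => q.1 < q.2), gA (x q.1) (x q.2)
  let GB : ({i // ¬ i ∈ S} → X) → ℂ := fun x =>
    ∏ q ∈ Finset.univ.filter (fun q : {i // ¬ i ∈ S} × {i // ¬ i ∈ S} => q.1 < q.2), gB (x q.1) (x q.2)
  have e2 : ∀ x ∈ box S, G x = GA (fun i => x i) * GB (fun i => x i) := by
    intro x hx
    rw [hboxmem] at hx
    have hs : (Finset.univ.filter (fun q : Fin N × Fin N => q.1 < q.2)) =
      ((Finset.univ.filter (fun q : {i // i ∈ S} × {i // i ∈ S} => q.1 < q.2)).map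
        ((Function.Embedding.subtype _).prodMap (Function.Embedding.subtype _))) ∪
      ((Finset.univ.filter (fun q : {i // ¬ i ∈ S} × {i // ¬ i ∈ S} => q.1 < q.2)).map
        ((Function.Embedding.subtype _).prodMap (Function.Embedding.subtype _))) ∪
      (Finset.univ.filter (fun q : Fin N × Fin N => q.1 < q.2 ∧ ¬ (q.1 ∈ S ↔ q.2 ∈ S))) := by
      ext q
      rw [Finset.mem_union, Finset.mem_union, mem_pmap, mem_pmap]
      simp only [Finset.mem_filter, Finset.mem_univ, true_and]
      tauto
    rw [hG]
    simp only
    rw [hs, Finset.prod_union, Finset.prod_union, Finset.prod_map, Finset.prod_map]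
    · have h3 : ∏ q ∈ (Finset.univ.filter (fun q : Fin N × Fin N => q.1 < q.2 ∧ ¬ (q.1 ∈ S ↔ q.2 ∈ S))), g (x q.1) (x q.2) = 1 := by
        refine Finset.prod_eq_one fun q hq => ?_
        simp only [Finset.mem_filter, Finset.mem_univ, true_and] at hq
        by_cases h1 : q.1 ∈ S
        · exact hAB _ ((hx _).2 h1) _ (fun h => hq.2 ⟨fun _ => (hx _).1 h, fun _ => h1⟩)
        · have h2 : q.2 ∈ S := by tauto
          exact hBA _ (fun h => h1 ((hx _).1 h)) _ ((hx _).2 h2)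
      rw [h3, mul_one]
      congr 1
      · refine Finset.prod_congr rfl fun q _ => ?_
        exact hAA _ ((hx _).2 q.1.2) _ ((hx _).2 q.2.2)
      · refine Finset.prod_congr rfl fun q _ => ?_
        exact hBB _ (fun h => q.1.2 ((hx _).1 h)) _ (fun h => q.2.2 ((hx _).1 h))
    · rw [Finset.disjoint_left]
      intro q
      rw [mem_pmap, mem_pmap]
      tauto
    · rw [Finset.disjoint_left]
      intro q
      rw [Finset.mem_union, mem_pmap, mem_pmap]
      simp only [Finset.mem_filter, Finset.mem_univ, true_and]
      tauto
  rw [setIntegral_congr_fun (hboxm S) e2]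
  simp only [box]
  rw [Measure.restrict_pi_pi]
  have hmp := measurePreserving_piEquivPiSubtypeProd (α := fun _ : Fin N => X)
    (fun i => m.restrict (if i ∈ S then A else Aᶜ)) (fun i => i ∈ S)
  have e3 := hmp.integral_comp (MeasurableEquiv.measurableEmbedding _)
    (fun z => GA z.1 * GB z.2)
  have e4 : (fun i : {i // i ∈ S} => m.restrict (if (i : Fin N) ∈ S then A else Aᶜ)) =
      fun _ => m.restrict A := by
    funext i; simp [i.2]
  have e5 : (fun i : {i // ¬ i ∈ S} => m.restrict (if (i : Fin N) ∈ S then A else Aᶜ)) =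
      fun _ => m.restrict Aᶜ := by
    funext i; simp [i.2]
  refine Eq.trans e3 ?_
  rw [integral_prod_mul, e4, e5]
  have c1 := II_congr (S.orderIsoOfFin rfl) (m.restrict A) gA
  have hc : Fintype.card {i // ¬ i ∈ S} = N - S.card := by
    rw [Fintype.card_subtype_compl]; simp
  have c2 := II_congr (Fintype.orderIsoFinOfCardEq {i // ¬ i ∈ S} hc) (m.restrict Aᶜ) gB
  rw [c1, c2]
  unfold II
  congr!

end abstr

section geom

variable {p : ℕ} [Fact p.Prime]

noncomputable def sc (i j : Fin 2) (ξ : P1 p) : ℚ_[p] := ξ.rep i / ξ.rep j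

theorem sc_mk (i j : Fin 2) (v : Fin 2 → ℚ_[p]) (hv : v ≠ 0) :
    sc i j (Projectivization.mk ℚ_[p] v hv) = v i / v j := by
  obtain ⟨a, ha⟩ := Projectivization.exists_smul_eq_mk_rep ℚ_[p] v hv
  unfold sc
  rw [← ha]
  simp only [Pi.smul_apply, Units.smul_def, smul_eq_mul]
  exact mul_div_mul_left _ _ a.ne_zero

theorem rep_le_mk (i j : Fin 2) (v : Fin 2 → ℚ_[p]) (hv : v ≠ 0) :
    ‖(Projectivization.mk ℚ_[p] v hv).rep i‖ ≤ ‖(Projectivization.mk ℚ_[p] v hv).rep j‖ ↔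
      ‖v i‖ ≤ ‖v j‖ := by
  obtain ⟨a, ha⟩ := Projectivization.exists_smul_eq_mk_rep ℚ_[p] v hv
  rw [← ha]
  simp only [Pi.smul_apply, Units.smul_def, smul_eq_mul, norm_mul]
  exact mul_le_mul_iff_right₀ (norm_pos_iff.2 a.ne_zero)

theorem rep_ne_mk (j : Fin 2) (v : Fin 2 → ℚ_[p]) (hv : v ≠ 0) :
    (Projectivization.mk ℚ_[p] v hv).rep j = 0 ↔ v j = 0 := by
  obtain ⟨a, ha⟩ := Projectivization.exists_smul_eq_mk_rep ℚ_[p] v hv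
  rw [← ha]
  simp [Pi.smul_apply, Units.smul_def, smul_eq_mul]

theorem isOpen_P1 (U : Set (P1 p)) :
    IsOpen U ↔ IsOpen {v : {v : Fin 2 → ℚ_[p] // v ≠ 0} |
      Projectivization.mk ℚ_[p] v.1 v.2 ∈ U} := Iff.rfl

theorem cont_coord (j : Fin 2) :
    Continuous fun v : {v : Fin 2 → ℚ_[p] // v ≠ 0} => v.1 j :=
  (continuous_apply j).comp continuous_subtype_val

theorem isOpen_V (j : Fin 2) : IsOpen {ξ : P1 p | ξ.rep j ≠ 0} := by
  rw [isOpen_P1]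
  simp only [Set.mem_ofPred_eq, ne_eq, rep_ne_mk]
  have : Continuous fun v : {v : Fin 2 → ℚ_[p] // v ≠ 0} => v.1 j := cont_coord j
  exact isOpen_ne.preimage this

def AA (i j : Fin 2) : Set (P1 p) := {ξ | ‖ξ.rep i‖ ≤ ‖ξ.rep j‖}

theorem isClosed_A (i j : Fin 2) : MeasurableSet (AA (p := p) i j) := by
  refine IsClosed.measurableSet ?_
  rw [← isOpen_compl_iff, isOpen_P1]
  simp only [AA, Set.mem_compl_iff, Set.mem_ofPred_eq, rep_le_mk]
  have h1 : Continuous fun v : {v : Fin 2 → ℚ_[p] // v ≠ 0} => ‖v.1 i‖ := (cont_coord i).norm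
  have h2 : Continuous fun v : {v : Fin 2 → ℚ_[p] // v ≠ 0} => ‖v.1 j‖ := (cont_coord j).norm
  exact (isClosed_le h1 h2).isOpen_compl

theorem measurable_sc (i j : Fin 2) : Measurable (sc (p := p) i j) := by
  refine measurable_of_isOpen fun U hU => ?_
  have hV : IsOpen {ξ : P1 p | ξ.rep j ≠ 0} := isOpen_V j
  have h1 : IsOpen (sc (p := p) i j ⁻¹' U ∩ {ξ : P1 p | ξ.rep j ≠ 0}) := by
    rw [isOpen_P1]
    simp only [Set.mem_inter_iff, Set.mem_preimage, Set.mem_ofPred_eq, ne_eq, rep_ne_mk, sc_mk]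
    have hc : ContinuousOn (fun v : {v : Fin 2 → ℚ_[p] // v ≠ 0} => v.1 i / v.1 j)
        {v | v.1 j ≠ 0} := by
      refine ContinuousOn.div (cont_coord i).continuousOn (cont_coord j).continuousOn (fun x hx => hx)
    have ho : IsOpen {v : {v : Fin 2 → ℚ_[p] // v ≠ 0} | v.1 j ≠ 0} := by
      have : Continuous fun v : {v : Fin 2 → ℚ_[p] // v ≠ 0} => v.1 j := cont_coord j
      exact isOpen_ne.preimage this
    have := hc.isOpen_inter_preimage ho hU
    rw [Set.inter_comm] at this
    exact this
  have h2 : MeasurableSet (sc (p := p) i j ⁻¹' U ∩ {ξ : P1 p | ξ.rep j ≠ 0}ᶜ) := by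
    by_cases h0 : (0 : ℚ_[p]) ∈ U
    · have : sc (p := p) i j ⁻¹' U ∩ {ξ : P1 p | ξ.rep j ≠ 0}ᶜ = {ξ : P1 p | ξ.rep j ≠ 0}ᶜ := by
        ext ξ
        simp only [Set.mem_inter_iff, Set.mem_preimage, Set.mem_compl_iff, Set.mem_ofPred_eq,
          not_not, and_iff_right_iff_imp, sc]
        intro h; simpa [h] using h0
      rw [this]; exact hV.measurableSet.compl
    · have : sc (p := p) i j ⁻¹' U ∩ {ξ : P1 p | ξ.rep j ≠ 0}ᶜ = ∅ := by
        ext ξ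
        simp only [Set.mem_inter_iff, Set.mem_preimage, Set.mem_compl_iff, Set.mem_ofPred_eq,
          not_not, sc, Set.mem_empty_iff_false, iff_false, not_and]
        intro h h'; rw [h'] at h; simp at h; exact h0 h
      rw [this]; exact MeasurableSet.empty
  rw [← Set.inter_union_compl (sc (p := p) i j ⁻¹' U) {ξ : P1 p | ξ.rep j ≠ 0}]
  exact h1.measurableSet.union h2

theorem rep_pos_of {i j : Fin 2} (hij : i ≠ j) (ξ : P1 p) (h : ‖ξ.rep i‖ ≤ ‖ξ.rep j‖) :
    ξ.rep j ≠ 0 := by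
  intro h0
  refine ξ.rep_nonzero ?_
  have h1 : ξ.rep i = 0 := by simpa [h0] using h
  funext k
  fin_cases i <;> fin_cases j <;> fin_cases k <;> simp_all

theorem pdelta_comm (ξ η : P1 p) : pdelta p ξ η = pdelta p η ξ := by
  unfold pdelta sdelta
  rw [mul_comm (max ‖η.rep 0‖ _), ← norm_neg]
  congr 2; ring

theorem pdelta_AA (ξ η : P1 p) (h1 : ξ ∈ AA 0 1) (h2 : η ∈ AA 0 1) :
    pdelta p ξ η = ‖sc 0 1 ξ - sc 0 1 η‖ := by
  have n1 := rep_pos_of (by decide) ξ h1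
  have n2 := rep_pos_of (by decide) η h2
  unfold pdelta sdelta sc
  rw [max_eq_right h1, max_eq_right h2, div_sub_div _ _ n1 n2, norm_div, norm_mul (ξ.rep 1)]

theorem pdelta_BB (ξ η : P1 p) (h1 : ξ ∉ AA 0 1) (h2 : η ∉ AA 0 1) :
    pdelta p ξ η = ‖sc 1 0 ξ - sc 1 0 η‖ := by
  simp only [AA, Set.mem_ofPred_eq, not_le] at h1 h2
  have n1 := rep_pos_of (by decide) ξ h1.le
  have n2 := rep_pos_of (by decide) η h2.le
  unfold pdelta sdelta sc
  rw [max_eq_left h1.le, max_eq_left h2.le, div_sub_div _ _ n1 n2, norm_div, norm_mul (ξ.rep 0),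
    norm_sub_rev]

theorem pdelta_AB (ξ η : P1 p) (h1 : ξ ∈ AA 0 1) (h2 : η ∉ AA 0 1) :
    pdelta p ξ η = 1 := by
  have n1 := rep_pos_of (by decide) ξ h1
  simp only [AA, Set.mem_ofPred_eq, not_le] at h1 h2
  have n2 := rep_pos_of (by decide) η h2.le
  have p1 := norm_pos_iff.2 n1
  have p2 := norm_pos_iff.2 n2
  unfold pdelta sdelta
  rw [max_eq_right h1, max_eq_left h2.le]
  have hlt : ‖ξ.rep 0 * η.rep 1‖ < ‖ξ.rep 1 * η.rep 0‖ := by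
    rw [norm_mul, norm_mul]
    exact mul_lt_mul' h1 h2 (norm_nonneg _) p1
  have : ‖ξ.rep 0 * η.rep 1 - ξ.rep 1 * η.rep 0‖ = ‖ξ.rep 1 * η.rep 0‖ := by
    rw [sub_eq_add_neg, Padic.add_eq_max_of_ne (by rw [norm_neg]; exact hlt.ne), norm_neg,
      max_eq_right hlt.le]
  rw [this, norm_mul, div_self (mul_pos p1 p2).ne']

theorem sc_le (ξ : P1 p) (h1 : ξ ∈ AA 0 1) : ‖sc 0 1 ξ‖ ≤ 1 := by
  unfold sc
  rw [norm_div]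
  exact div_le_one_of_le₀ h1 (norm_nonneg _)

theorem sc_lt (ξ : P1 p) (h1 : ξ ∉ AA 0 1) : ‖sc 1 0 ξ‖ < 1 := by
  simp only [AA, Set.mem_ofPred_eq, not_le] at h1
  unfold sc
  rw [norm_div]
  exact (div_lt_one ((norm_nonneg _).trans_lt h1)).2 h1

theorem norm_sub_le_one {x y : ℚ_[p]} (hx : ‖x‖ ≤ 1) (hy : ‖y‖ ≤ 1) : ‖x - y‖ ≤ 1 := by
  rw [sub_eq_add_neg]
  exact (Padic.nonarchimedean _ _).trans (max_le hx (by rwa [norm_neg]))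

theorem pdelta_nonneg (ξ η : P1 p) : 0 ≤ pdelta p ξ η := by
  unfold pdelta sdelta; positivity

theorem pdelta_le (ξ η : P1 p) : pdelta p ξ η ≤ 1 := by
  by_cases h1 : ξ ∈ AA 0 1 <;> by_cases h2 : η ∈ AA 0 1
  · rw [pdelta_AA _ _ h1 h2]; exact norm_sub_le_one (sc_le _ h1) (sc_le _ h2)
  · rw [pdelta_AB _ _ h1 h2]
  · rw [pdelta_comm, pdelta_AB _ _ h2 h1]
  · rw [pdelta_BB _ _ h1 h2]; exact norm_sub_le_one (sc_lt _ h1).le (sc_lt _ h2).le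

theorem measurable_pdelta : Measurable (Function.uncurry (pdelta p)) := by
  classical
  have : Function.uncurry (pdelta p) = fun z : P1 p × P1 p =>
      if z.1 ∈ AA 0 1 then (if z.2 ∈ AA 0 1 then ‖sc 0 1 z.1 - sc 0 1 z.2‖ else 1)
      else (if z.2 ∈ AA 0 1 then 1 else ‖sc 1 0 z.1 - sc 1 0 z.2‖) := by
    funext ⟨ξ, η⟩
    by_cases h1 : ξ ∈ AA 0 1 <;> by_cases h2 : η ∈ AA 0 1 <;>
      simp only [Function.uncurry, h1, h2, if_true, if_false]
    · rw [pdelta_AA _ _ h1 h2]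
    · rw [pdelta_AB _ _ h1 h2]
    · rw [pdelta_comm, pdelta_AB _ _ h2 h1]
    · rw [pdelta_BB _ _ h1 h2]
  rw [this]
  have a1 : MeasurableSet {z : P1 p × P1 p | z.1 ∈ AA 0 1} := measurable_fst (isClosed_A 0 1)
  have a2 : MeasurableSet {z : P1 p × P1 p | z.2 ∈ AA 0 1} := measurable_snd (isClosed_A 0 1)
  refine Measurable.ite a1 (Measurable.ite a2 ?_ measurable_const)
    (Measurable.ite a2 measurable_const ?_)
  · exact (((measurable_sc 0 1).comp measurable_fst).sub
      ((measurable_sc 0 1).comp measurable_snd)).norm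
  · exact (((measurable_sc 1 0).comp measurable_fst).sub
      ((measurable_sc 1 0).comp measurable_snd)).norm

theorem mobius_eq (A : Matrix (Fin 2) (Fin 2) ℚ_[p]) (ξ : P1 p) (h : A.mulVec ξ.rep ≠ 0) :
    mobius p A ξ = Projectivization.mk ℚ_[p] (A.mulVec ξ.rep) h := by
  unfold mobius; rw [dif_pos h]

theorem mobius_T (b : ℚ_[p]) (ξ : P1 p) (hξ : ξ ∈ AA 0 1) (hb : ‖b‖ ≤ 1) :
    mobius p !![1, b; 0, 1] ξ ∈ AA 0 1 ∧ sc 0 1 (mobius p !![1, b; 0, 1] ξ) = sc 0 1 ξ + b := by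
  have n1 := rep_pos_of (by decide) ξ hξ
  have e0 : (!![1, b; 0, 1].mulVec ξ.rep) 0 = ξ.rep 0 + b * ξ.rep 1 := by
    simp [Matrix.mulVec, dotProduct, Fin.sum_univ_two]
  have e1 : (!![1, b; 0, 1].mulVec ξ.rep) 1 = ξ.rep 1 := by
    simp [Matrix.mulVec, dotProduct, Fin.sum_univ_two]
  have hne : !![1, b; 0, 1].mulVec ξ.rep ≠ 0 := by
    intro h; rw [h] at e1; exact n1 e1.symm
  rw [mobius_eq _ _ hne, sc_mk, e0, e1]
  constructor
  · simp only [AA, Set.mem_ofPred_eq, rep_le_mk, e0, e1]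
    refine (Padic.nonarchimedean _ _).trans (max_le hξ ?_)
    rw [norm_mul]
    exact mul_le_of_le_one_left (norm_nonneg _) hb
  · unfold sc; field_simp

theorem mobius_W (ξ : P1 p) (i j : Fin 2) (hij : i ≠ j) :
    (‖(mobius p !![0, 1; 1, 0] ξ).rep i‖ ≤ ‖(mobius p !![0, 1; 1, 0] ξ).rep j‖ ↔
      ‖ξ.rep j‖ ≤ ‖ξ.rep i‖)
     ∧ sc i j (mobius p !![0, 1; 1, 0] ξ) = sc j i ξ := by
  have e0 : (!![0, 1; 1, 0].mulVec ξ.rep) 0 = ξ.rep 1 := by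
    simp [Matrix.mulVec, dotProduct, Fin.sum_univ_two]
  have e1 : (!![0, 1; 1, 0].mulVec ξ.rep) 1 = ξ.rep 0 := by
    simp [Matrix.mulVec, dotProduct, Fin.sum_univ_two]
  have hne : !![0, 1; 1, 0].mulVec ξ.rep ≠ 0 := by
    intro h
    rw [h] at e0 e1
    refine ξ.rep_nonzero ?_
    funext k
    fin_cases k
    · exact e1.symm
    · exact e0.symm
  rw [mobius_eq _ _ hne, sc_mk, rep_le_mk]
  unfold sc
  fin_cases i <;> fin_cases j
  · exact absurd rfl hij
  · exact ⟨by simp [e0, e1], by simp [e0, e1]⟩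
  · exact ⟨by simp [e0, e1], by simp [e0, e1]⟩
  · exact absurd rfl hij

end geom

section meas

variable {p : ℕ} [Fact p.Prime]

theorem meas_Z : MeasurableSet (Zball p) :=
  (isClosed_le continuous_norm continuous_const).measurableSet

theorem meas_P : MeasurableSet (Pball p) :=
  (isOpen_lt continuous_norm continuous_const).measurableSet

theorem P_sub_Z : Pball p ⊆ Zball p := fun x hx => by
  have h : ‖x‖ < 1 := hx
  exact (show ‖x‖ ≤ 1 from h.le)

theorem mu_P (μ : Measure ℚ_[p]) [μ.IsAddHaarMeasure] (hμ : μ (Zball p) = 1) :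
    (p : ENNReal) * μ (Pball p) = 1 := by
  have hU : Zball p = ⋃ k ∈ Finset.range p, (fun x : ℚ_[p] => -(k : ℚ_[p]) + x) ⁻¹' Pball p := by
    ext x
    simp only [Set.mem_iUnion, Set.mem_preimage, Finset.mem_range, exists_prop]
    constructor
    · intro hx
      obtain ⟨n, hn, h⟩ := PadicInt.exists_mem_range (⟨x, hx⟩ : ℤ_[p])
      refine ⟨n, hn, ?_⟩
      rw [IsLocalRing.mem_maximalIdeal, PadicInt.mem_nonunits] at h
      have h2 : ‖x - (n : ℚ_[p])‖ < 1 := by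
        have key : ∀ z : ℤ_[p], ‖z - (n : ℤ_[p])‖ < 1 → ‖(z : ℚ_[p]) - (n : ℚ_[p])‖ < 1 := by
          intro z hz
          rw [PadicInt.norm_def, PadicInt.coe_sub, PadicInt.coe_natCast] at hz
          exact hz
        exact key _ h
      change ‖-(n : ℚ_[p]) + x‖ < 1
      rwa [neg_add_eq_sub]
    · rintro ⟨n, _, h⟩
      have h : ‖-(n : ℚ_[p]) + x‖ < 1 := h
      have hn : ‖(n : ℚ_[p])‖ ≤ 1 := by
        have := Padic.norm_int_le_one (p := p) (n : ℤ)
        simpa using this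
      have e : x = (-(n : ℚ_[p]) + x) + n := by ring
      change ‖x‖ ≤ 1
      rw [e]
      exact (Padic.nonarchimedean _ _).trans (max_le h.le hn)
  have hμ' := hμ
  rw [hU, measure_biUnion_finset] at hμ'
  · simpa [measure_preimage_add] using hμ'
  · intro k hk l hl hkl
    refine Set.disjoint_left.2 fun x h1 h2 => hkl ?_
    have h1 : ‖-(k : ℚ_[p]) + x‖ < 1 := h1
    have h2 : ‖-(l : ℚ_[p]) + x‖ < 1 := h2
    have h3 : ‖(((k : ℤ) - (l : ℤ) : ℤ) : ℚ_[p])‖ < 1 := by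
      have e : (((k : ℤ) - (l : ℤ) : ℤ) : ℚ_[p]) = (-(l : ℚ_[p]) + x) + -(-(k : ℚ_[p]) + x) := by
        push_cast; ring
      rw [e]
      refine (Padic.nonarchimedean _ _).trans_lt (max_lt h2 ?_)
      rwa [norm_neg]
    rw [Padic.norm_intCast_lt_one_iff] at h3
    have hk := Finset.mem_range.1 hk
    have hl := Finset.mem_range.1 hl
    have := Int.eq_zero_of_abs_lt_dvd h3 (by rw [abs_lt]; omega)
    omega
  · intro k _
    exact (measurable_const_add _) meas_P

theorem inv_m (ν : Measure (P1 p)) (hν : IsGLInvariant p ν) (S : Set ℚ_[p]) (hS : MeasurableSet S)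
    (b : ℚ_[p]) (hb : ‖b‖ ≤ 1) :
    ν (AA 0 1 ∩ sc 0 1 ⁻¹' ((fun x => x + b) ⁻¹' S)) ≤ ν (AA 0 1 ∩ sc 0 1 ⁻¹' S) := by
  rw [← hν !![1, b; 0, 1] ?_ ?_ _
    ((isClosed_A 0 1).inter (measurable_sc 0 1 (measurable_add_const b hS)))]
  · refine measure_mono ?_
    rintro _ ⟨ξ, ⟨h1, h2⟩, rfl⟩
    have := mobius_T b ξ h1 hb
    refine ⟨this.1, ?_⟩
    rw [Set.mem_preimage, this.2]
    exact h2
  · intro i j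
    fin_cases i <;> fin_cases j <;> simp [hb]
  · simp [Matrix.det_fin_two]

theorem inv_m' (ν : Measure (P1 p)) (hν : IsGLInvariant p ν) (S : Set ℚ_[p]) (hS : MeasurableSet S)
    (b : ℚ_[p]) (hb : ‖b‖ ≤ 1) :
    ν (AA 0 1 ∩ sc 0 1 ⁻¹' ((fun x => x + b) ⁻¹' S)) = ν (AA 0 1 ∩ sc 0 1 ⁻¹' S) := by
  refine le_antisymm (inv_m ν hν S hS b hb) ?_
  have := inv_m ν hν ((fun x => x + b) ⁻¹' S) (measurable_add_const b hS) (-b) (by rwa [norm_neg])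
  simpa [Set.preimage_preimage] using this

theorem swap_m (ν : Measure (P1 p)) (hν : IsGLInvariant p ν) (S : Set ℚ_[p])
    (hS : MeasurableSet S) :
    ν ((AA 0 1)ᶜ ∩ sc 1 0 ⁻¹' S) = ν (AA 0 1 ∩ sc 0 1 ⁻¹' (S ∩ Pball p)) := by
  have hW : ∀ i j, ‖(!![0, 1; 1, 0] : Matrix (Fin 2) (Fin 2) ℚ_[p]) i j‖ ≤ 1 := by
    intro i j
    fin_cases i <;> fin_cases j <;> simp
  have hd : ‖(!![0, 1; 1, 0] : Matrix (Fin 2) (Fin 2) ℚ_[p]).det‖ = 1 := by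
    simp [Matrix.det_fin_two]
  refine le_antisymm ?_ ?_
  · rw [← hν _ hW hd _ ((isClosed_A 0 1).compl.inter (measurable_sc 1 0 hS))]
    refine measure_mono ?_
    rintro _ ⟨ξ, ⟨h1, h2⟩, rfl⟩
    have w1 := mobius_W ξ 0 1 (by decide)
    have hl := sc_lt ξ h1
    simp only [AA, Set.mem_compl_iff, Set.mem_ofPred_eq, not_le] at h1
    refine ⟨w1.1.2 h1.le, ?_⟩
    rw [Set.mem_preimage, w1.2]
    exact ⟨h2, hl⟩
  · rw [← hν _ hW hd _ ((isClosed_A 0 1).inter (measurable_sc 0 1 (hS.inter meas_P)))]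
    refine measure_mono ?_
    rintro _ ⟨ξ, ⟨h1, h2, h3⟩, rfl⟩
    have w1 := mobius_W ξ 0 1 (by decide)
    have w2 := mobius_W ξ 1 0 (by decide)
    have n1 := rep_pos_of (by decide) ξ h1
    refine ⟨fun h => ?_, ?_⟩
    · have h := w1.1.1 h
      have h3 : ‖ξ.rep 0 / ξ.rep 1‖ < 1 := h3
      rw [norm_div, div_lt_one (norm_pos_iff.2 n1)] at h3
      exact absurd h3 (not_lt.2 h)
    · rw [Set.mem_preimage, w2.2]
      exact h2

theorem map_A (μ : Measure ℚ_[p]) [SigmaFinite μ] [μ.IsAddHaarMeasure] (hμ : μ (Zball p) = 1)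
    (ν : Measure (P1 p)) [IsProbabilityMeasure ν] (hν : IsGLInvariant p ν)
    (S : Set ℚ_[p]) (hS : MeasurableSet S) :
    ν (AA 0 1 ∩ sc 0 1 ⁻¹' S) = ν (AA 0 1) * μ (S ∩ Zball p) := by
  set m : Measure ℚ_[p] := (ν.restrict (AA 0 1)).map (sc 0 1) with hm
  have hmS : ∀ T, MeasurableSet T → m T = ν (AA 0 1 ∩ sc 0 1 ⁻¹' T) := by
    intro T hT
    rw [hm, Measure.map_apply (measurable_sc 0 1) hT,
      Measure.restrict_apply (measurable_sc 0 1 hT), Set.inter_comm]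
  have hmZ : ∀ᵐ x ∂m, x ∈ Zball p := by
    rw [ae_iff]
    change m (Zball p)ᶜ = 0
    rw [hmS _ meas_Z.compl]
    convert measure_empty (μ := ν)
    ext ξ
    simp only [Set.mem_inter_iff, Set.mem_empty_iff_false, iff_false, not_and]
    intro h1 h2
    exact h2 (sc_le ξ h1)
  have hfin : IsFiniteMeasure m := by rw [hm]; infer_instance
  have hmeas : Measurable (Function.uncurry fun (y x : ℚ_[p]) => S.indicator (fun _ => (1 : ENNReal)) (x + y)) := by
    exact (measurable_const.indicator hS).comp (measurable_snd.add measurable_fst)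
  have hsw := lintegral_lintegral_swap (μ := μ.restrict (Zball p)) (ν := m) hmeas.aemeasurable
  have hL : ∫⁻ y in Zball p, ∫⁻ x, S.indicator (fun _ => (1 : ENNReal)) (x + y) ∂m ∂μ = m S := by
    have : ∀ y ∈ Zball p, ∫⁻ x, S.indicator (fun _ => (1 : ENNReal)) (x + y) ∂m = m S := by
      intro y hy
      have hT : MeasurableSet ((fun x => x + y) ⁻¹' S) := measurable_add_const y hS
      rw [hmS S hS, ← inv_m' ν hν S hS y hy, ← hmS _ hT, ← lintegral_indicator_one hT]
      rfl
    rw [setLIntegral_congr_fun meas_Z this, setLIntegral_const, hμ, mul_one]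
  have hR : ∫⁻ x, ∫⁻ y in Zball p, S.indicator (fun _ => (1 : ENNReal)) (x + y) ∂μ ∂m =
      μ (S ∩ Zball p) * m Set.univ := by
    rw [← lintegral_const]
    refine lintegral_congr_ae ?_
    filter_upwards [hmZ] with x hx
    have hT : MeasurableSet ((fun y => x + y) ⁻¹' S) := measurable_const_add x hS
    have e1 : ∫⁻ y in Zball p, S.indicator (fun _ => (1 : ENNReal)) (x + y) ∂μ =
        μ.restrict (Zball p) ((fun y => x + y) ⁻¹' S) := by
      rw [← lintegral_indicator_one hT]; rfl
    rw [e1, Measure.restrict_apply hT, ← measure_preimage_add μ x (S ∩ Zball p)]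
    congr 1
    ext y
    simp only [Set.mem_inter_iff, Set.mem_preimage, and_congr_right_iff]
    intro _
    have hx : ‖x‖ ≤ 1 := hx
    constructor
    · intro hy
      exact (Padic.nonarchimedean _ _).trans (max_le hx hy)
    · intro hy
      have hy : ‖x + y‖ ≤ 1 := hy
      have := norm_sub_le_one hy hx
      rwa [add_sub_cancel_left] at this
  rw [← hmS S hS, ← hL, hsw, hR, mul_comm, hmS _ MeasurableSet.univ]
  simp

theorem nuA (μ : Measure ℚ_[p]) [SigmaFinite μ] [μ.IsAddHaarMeasure] (hμ : μ (Zball p) = 1)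
    (ν : Measure (P1 p)) [IsProbabilityMeasure ν] (hν : IsGLInvariant p ν) :
    ν (AA 0 1) = ((p / (p + 1) : NNReal) : ENNReal) := by
  have h1 : ν (AA 0 1) + ν (AA 0 1)ᶜ = 1 := prob_add_prob_compl (isClosed_A 0 1)
  have h2 := swap_m ν hν Set.univ MeasurableSet.univ
  rw [Set.preimage_univ, Set.inter_univ, Set.univ_inter, map_A μ hμ ν hν _ meas_P] at h2
  have h3 : Pball p ∩ Zball p = Pball p :=
    Set.inter_eq_left.2 P_sub_Z
  rw [h3] at h2
  rw [h2] at h1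
  have h4 := mu_P μ hμ
  have hp : (p : NNReal) ≠ 0 := by exact_mod_cast (Fact.out : p.Prime).ne_zero
  have ha : ν (AA 0 1) ≠ ⊤ := measure_ne_top _ _
  have hb : μ (Pball p) ≠ ⊤ := by
    intro h; rw [h] at h4
    rw [ENNReal.mul_top (by exact_mod_cast hp)] at h4
    simp at h4
  lift ν (AA 0 1) to NNReal using ha with a
  lift μ (Pball p) to NNReal using hb with b
  norm_cast at h1 h4 ⊢
  rw [eq_div_iff (by positivity)]
  push_cast
  calc a * (p + 1) = a * p + a * 1 := by ring
    _ = a * p + a * (p * b) := by rw [h4]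
    _ = p * (a + a * b) := by ring
    _ = p := by rw [h1, mul_one]

theorem mapA_eq (μ : Measure ℚ_[p]) [SigmaFinite μ] [μ.IsAddHaarMeasure] (hμ : μ (Zball p) = 1)
    (ν : Measure (P1 p)) [IsProbabilityMeasure ν] (hν : IsGLInvariant p ν) :
    (ν.restrict (AA 0 1)).map (sc 0 1) = (p / (p + 1) : NNReal) • μ.restrict (Zball p) := by
  ext S hS
  rw [Measure.map_apply (measurable_sc 0 1) hS,
      Measure.restrict_apply (measurable_sc 0 1 hS), Set.inter_comm, map_A μ hμ ν hν S hS,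
      Measure.smul_apply, Measure.restrict_apply hS, nuA μ hμ ν hν]
  rfl

theorem mapB_eq (μ : Measure ℚ_[p]) [SigmaFinite μ] [μ.IsAddHaarMeasure] (hμ : μ (Zball p) = 1)
    (ν : Measure (P1 p)) [IsProbabilityMeasure ν] (hν : IsGLInvariant p ν) :
    (ν.restrict (AA 0 1)ᶜ).map (sc 1 0) = (p / (p + 1) : NNReal) • μ.restrict (Pball p) := by
  ext S hS
  have h3 : S ∩ Pball p ∩ Zball p = S ∩ Pball p :=
    Set.inter_eq_left.2 fun x hx => P_sub_Z hx.2
  rw [Measure.map_apply (measurable_sc 1 0) hS,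
      Measure.restrict_apply (measurable_sc 1 0 hS), Set.inter_comm, swap_m ν hν S hS,
      map_A μ hμ ν hν _ (hS.inter meas_P), h3,
      Measure.smul_apply, Measure.restrict_apply hS, nuA μ hμ ν hν]
  rfl

theorem kernel_meas (β : ℂ) :
    Measurable (Function.uncurry fun x y : ℚ_[p] => (‖x - y‖ : ℂ) ^ β) := by
  have h : Measurable fun z : ℚ_[p] × ℚ_[p] => ((‖z.1 - z.2‖ : ℝ) : ℂ) :=
    Complex.measurable_ofReal.comp (measurable_fst.sub measurable_snd).norm
  exact h.pow_const β

theorem cpow_bound (β : ℝ) (hβ : 0 < β) (r : ℝ) (h0 : 0 ≤ r) (h1 : r ≤ 1) :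
    ‖(r : ℂ) ^ (β : ℂ)‖ ≤ 1 := by
  rw [← Complex.ofReal_cpow h0, Complex.norm_real, Real.norm_of_nonneg (Real.rpow_nonneg h0 _)]
  exact Real.rpow_le_one h0 h1 hβ.le

theorem ZP1_eq (μ : Measure ℚ_[p]) [SigmaFinite μ] [μ.IsAddHaarMeasure] (hμ : μ (Zball p) = 1)
    (ν : Measure (P1 p)) [IsProbabilityMeasure ν] (hν : IsGLInvariant p ν) (β : ℝ) (hβ : 0 < β)
    (N : ℕ) :
    ZP1 p ν N (β : ℂ) = ∑ S : Finset (Fin N),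
      (((p : ℂ) / (p + 1)) ^ S.card * ZN p μ (Zball p) S.card β) *
      (((p : ℂ) / (p + 1)) ^ (N - S.card) * ZN p μ (Pball p) (N - S.card) β) := by
  have fZ : IsFiniteMeasure (μ.restrict (Zball p)) := ⟨by
    rw [Measure.restrict_apply_univ, hμ]; exact ENNReal.one_lt_top⟩
  have fP : IsFiniteMeasure (μ.restrict (Pball p)) := ⟨by
    rw [Measure.restrict_apply_univ]
    refine (measure_mono (t := Zball p) P_sub_Z).trans_lt ?_
    rw [hμ]; exact ENNReal.one_lt_top⟩
  have h := II_split N ν (AA 0 1) (isClosed_A 0 1)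
    (fun x y => ((pdelta p x y : ℝ) : ℂ) ^ (β : ℂ))
    (fun x y => (‖sc 0 1 x - sc 0 1 y‖ : ℂ) ^ (β : ℂ))
    (fun x y => (‖sc 1 0 x - sc 1 0 y‖ : ℂ) ^ (β : ℂ))
    ((Complex.measurable_ofReal.comp measurable_pdelta).pow_const _)
    (fun x y => cpow_bound β hβ _ (pdelta_nonneg _ _) (pdelta_le _ _))
    (fun x hx y hy => by rw [pdelta_AA x y hx hy])
    (fun x hx y hy => by rw [pdelta_BB x y hx hy])
    (fun x hx y hy => by rw [pdelta_AB x y hx hy]; simp)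
    (fun x hx y hy => by rw [pdelta_comm, pdelta_AB y x hy hx]; simp)
  refine Eq.trans ?_ (h.trans (Finset.sum_congr rfl fun S _ => ?_))
  · rfl
  · have kA := II_map (Fin S.card) (ν.restrict (AA 0 1)) (sc 0 1) (measurable_sc 0 1) _
      (kernel_meas (p := p) (β : ℂ))
    have kB := II_map (Fin (N - S.card)) (ν.restrict (AA 0 1)ᶜ) (sc 1 0) (measurable_sc 1 0) _
      (kernel_meas (p := p) (β : ℂ))
    rw [← kA, ← kB, mapA_eq μ hμ ν hν, mapB_eq μ hμ ν hν, II_smul, II_smul]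
    simp only [Fintype.card_fin]
    push_cast
    rfl

theorem ZN_bound (μ : Measure ℚ_[p]) [SigmaFinite μ] [μ.IsAddHaarMeasure] (hμ : μ (Zball p) = 1)
    (X : Set ℚ_[p]) (hX : X ⊆ Zball p) (_hXm : MeasurableSet X) (β : ℝ) (hβ : 0 < β) (N : ℕ) :
    ‖ZN p μ X N β‖ ≤ 1 := by
  unfold ZN
  rw [← Measure.restrict_pi_pi]
  have hle : (Measure.pi fun _ : Fin N => μ) (Set.pi Set.univ fun _ => X) ≤ 1 := by
    rw [Measure.pi_pi]
    refine Finset.prod_le_one' fun _ _ => ?_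
    exact (measure_mono hX).trans hμ.le
  refine (norm_setIntegral_le_of_norm_le_const (C := 1) (hle.trans_lt ENNReal.one_lt_top) ?_).trans ?_
  · intro x hx
    rw [norm_prod]
    refine Finset.prod_le_one (fun _ _ => norm_nonneg _) fun q _ => ?_
    exact cpow_bound β hβ _ (norm_nonneg _)
      (norm_sub_le_one (hX (hx q.1 trivial)) (hX (hx q.2 trivial)))
  · rw [one_mul]
    exact ENNReal.toReal_le_of_le_ofReal zero_le_one (by simpa using hle)

theorem ZP1_bound (ν : Measure (P1 p)) [IsProbabilityMeasure ν] (β : ℝ) (hβ : 0 < β) (N : ℕ) :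
    ‖ZP1 p ν N β‖ ≤ 1 := by
  unfold ZP1
  refine (norm_integral_le_of_norm_le_const (C := 1) (Filter.Eventually.of_forall fun x => ?_)).trans ?_
  · rw [norm_prod]
    exact Finset.prod_le_one (fun _ _ => norm_nonneg _) fun q _ =>
      cpow_bound β hβ _ (pdelta_nonneg _ _) (pdelta_le _ _)
  · simp

theorem summ (z : ℕ → ℂ) (hz : ∀ N, ‖z N‖ ≤ 1) (g : ℂ) :
    Summable fun N => ‖z N * g ^ N / (N.factorial : ℂ)‖ := by
  refine Summable.of_nonneg_of_le (fun _ => norm_nonneg _) (fun N => ?_)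
    (Real.summable_pow_div_factorial ‖g‖)
  rw [norm_div, norm_mul, norm_pow, Complex.norm_natCast]
  gcongr
  exact mul_le_of_le_one_left (by positivity) (hz N)

end meas

theorem statement_14 (p : ℕ) [Fact p.Prime]
    (μ : Measure ℚ_[p]) [SigmaFinite μ] [μ.IsAddHaarMeasure] (hμ : μ (Zball p) = 1)
    (ν : Measure (P1 p)) [IsProbabilityMeasure ν] (hν : IsGLInvariant p ν)
    (β : ℝ) (hβ : 0 < β) (f : ℂ) :
    Summable (fun N => ‖ZP1 p ν N (β : ℂ) * f ^ N / (N.factorial : ℂ)‖) ∧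
    Summable (fun N =>
      ‖ZN p μ (Zball p) N (β : ℂ) * ((p : ℂ) * f / ((p : ℂ) + 1)) ^ N / (N.factorial : ℂ)‖) ∧
    Summable (fun N =>
      ‖ZN p μ (Pball p) N (β : ℂ) * ((p : ℂ) * f / ((p : ℂ) + 1)) ^ N / (N.factorial : ℂ)‖) ∧
    (∑' N, ZP1 p ν N (β : ℂ) * f ^ N / (N.factorial : ℂ)) =
      (∑' N, ZN p μ (Zball p) N (β : ℂ) * ((p : ℂ) * f / ((p : ℂ) + 1)) ^ N /
          (N.factorial : ℂ)) *
      (∑' N, ZN p μ (Pball p) N (β : ℂ) * ((p : ℂ) * f / ((p : ℂ) + 1)) ^ N /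
          (N.factorial : ℂ)) := by
  have b1 := ZP1_bound ν β hβ
  have b2 := ZN_bound μ hμ (Zball p) subset_rfl meas_Z β hβ
  have b3 := ZN_bound μ hμ (Pball p) P_sub_Z meas_P β hβ
  have s2 := summ _ b2 ((p : ℂ) * f / ((p : ℂ) + 1))
  have s3 := summ _ b3 ((p : ℂ) * f / ((p : ℂ) + 1))
  refine ⟨summ _ b1 f, s2, s3, ?_⟩
  rw [tsum_mul_tsum_eq_tsum_sum_antidiagonal_of_summable_norm s2 s3]
  refine tsum_congr fun N => ?_
  rw [ZP1_eq μ hμ ν hν β hβ N]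
  have h := Finset.sum_powerset_apply_card (fun k =>
      (((p : ℂ) / (p + 1)) ^ k * ZN p μ (Zball p) k β) *
      (((p : ℂ) / (p + 1)) ^ (N - k) * ZN p μ (Pball p) (N - k) β))
      (x := (Finset.univ : Finset (Fin N)))
  rw [Finset.powerset_univ, Finset.card_univ, Fintype.card_fin] at h
  rw [h, Finset.Nat.sum_antidiagonal_eq_sum_range_succ_mk, Finset.sum_mul, Finset.sum_div]
  refine Finset.sum_congr rfl fun k hk => ?_
  have hk : k ≤ N := Nat.lt_succ_iff.1 (Finset.mem_range.1 hk)
  have hc : (N.choose k : ℂ) = N.factorial / (k.factorial * (N - k).factorial) :=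
    Nat.cast_choose ℂ hk
  have hf : f ^ N = f ^ k * f ^ (N - k) := by rw [← pow_add, Nat.add_sub_cancel' hk]
  have n1 : (N.factorial : ℂ) ≠ 0 := by exact_mod_cast N.factorial_ne_zero
  have n2 : (k.factorial : ℂ) ≠ 0 := by exact_mod_cast k.factorial_ne_zero
  have n3 : ((N - k).factorial : ℂ) ≠ 0 := by exact_mod_cast (N - k).factorial_ne_zero
  have hg : (p : ℂ) * f / ((p : ℂ) + 1) = (p : ℂ) / (p + 1) * f := mul_div_right_comm _ _ _
  rw [nsmul_eq_mul, hc, hf, hg, mul_pow, mul_pow]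
  field_simp

end LogCoulomb
end

section
/- For every prime p, every integer N ≥ 2, and every β ∈ ℂ with Re(β) > −2/N, the integrals Z_k(ℤ_p, β) converge absolutely for all 0 ≤ k ≤ N and satisfy the quadratic recurrence Z_N(ℤ_p,β) / (N!·p^{(1/2)(N(N−1)/2)β}) = Σ_{k=1}^{N−1} (k/N) · [sinh((log p / 2)·[(N + (N(N−1)/2)β)(1 − 2k/N) + 1]) / sinh((log p / 2)·[(N + (N(N−1)/2)β) − 1])] · [Z_{N−k}(ℤ_p,β) / ((N−k)!·p^{(1/2)((N−k)(N−k−1)/2)β})] · [Z_k(ℤ_p,β) / (k!·p^{(1/2)(k(k−1)/2)β})]. -/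
open MeasureTheory
open scoped LinearAlgebra.Projectivization

namespace LogCoulomb

/-- the symmetric kernel -/
noncomputable def KK {𝕜 : Type*} [RCLike 𝕜] {p : ℕ} [Fact p.Prime] (ψ : ℝ → 𝕜) (ι : Type) [Fintype ι]
    [DecidableEq ι] (x : ι → ℚ_[p]) : 𝕜 :=
  ∏ i, ∏ j, if i = j then 1 else ψ ‖x i - x j‖

noncomputable def ZZ {𝕜 : Type*} [RCLike 𝕜] {p : ℕ} [Fact p.Prime] (ν : Measure ℚ_[p]) (ψ : ℝ → 𝕜) (ι : Type) [Fintype ι]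
    [DecidableEq ι] : 𝕜 :=
  ∫ x, KK ψ ι x ∂(Measure.pi fun _ : ι => ν)

lemma pi_add_measure {α : Type*} [MeasurableSpace α] (ν₁ ν₂ : Measure α) [IsFiniteMeasure ν₁]
    [IsFiniteMeasure ν₂] (ι : Type) [Fintype ι] [DecidableEq ι] :
    (Measure.pi fun _ : ι => ν₁ + ν₂) =
      ∑ S : Finset ι, Measure.pi (fun i : ι => if i ∈ S then ν₁ else ν₂) := by
  have h : ∀ (S : Finset ι) (i : ι), IsFiniteMeasure (if i ∈ S then ν₁ else ν₂) := by
    intro S i; split_ifs <;> infer_instance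
  refine Measure.pi_eq (fun s hs => ?_)
  rw [Measure.coe_finsetSum, Finset.sum_apply]
  simp only [Measure.pi_pi, Measure.coe_add, Pi.add_apply]
  rw [Fintype.prod_add]
  refine Finset.sum_congr rfl (fun S _ => ?_)
  rw [← Finset.prod_mul_prod_compl S (fun i => (if i ∈ S then ν₁ else ν₂) (s i))]
  congr 1
  · exact Finset.prod_congr rfl (fun i hi => by simp [hi])
  · exact Finset.prod_congr rfl (fun i hi => by simp [Finset.mem_compl.1 hi])

lemma KK_reindex {𝕜 : Type*} [RCLike 𝕜] {p : ℕ} [Fact p.Prime] (ψ : ℝ → 𝕜) {ι κ : Type} [Fintype ι]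
    [DecidableEq ι] [Fintype κ] [DecidableEq κ] (e : κ ≃ ι) (x : ι → ℚ_[p]) :
    KK ψ κ (fun i => x (e i)) = KK ψ ι x := by
  unfold KK
  rw [← e.prod_comp]
  refine Finset.prod_congr rfl (fun i _ => ?_)
  rw [← e.prod_comp]
  simp

lemma ZZ_reindex {𝕜 : Type*} [RCLike 𝕜] {p : ℕ} [Fact p.Prime] (ν : Measure ℚ_[p]) [SigmaFinite ν]
    (ψ : ℝ → 𝕜) {ι κ : Type} [Fintype ι]
    [DecidableEq ι] [Fintype κ] [DecidableEq κ] (e : κ ≃ ι) : ZZ ν ψ ι = ZZ ν ψ κ := by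
  unfold ZZ
  rw [← (measurePreserving_piCongrLeft (fun _ : ι => ν) e).integral_comp']
  congr 1; ext x
  rw [← KK_reindex ψ e]
  congr 1; ext i
  exact Equiv.piCongrLeft_apply_apply (P := fun _ => ℚ_[p]) e x i

lemma ZZ_card {𝕜 : Type*} [RCLike 𝕜] {p : ℕ} [Fact p.Prime] (ν : Measure ℚ_[p]) [SigmaFinite ν]
    (ψ : ℝ → 𝕜) {ι : Type} [Fintype ι] [DecidableEq ι] (k : ℕ) (h : Fintype.card ι = k) :
    ZZ ν ψ ι = ZZ ν ψ (Fin k) :=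
  ZZ_reindex ν ψ (Fintype.equivFinOfCardEq h).symm

/-- factorization when cross terms are 1 -/
lemma KK_split {𝕜 : Type*} [RCLike 𝕜] {p : ℕ} [Fact p.Prime] (ψ : ℝ → 𝕜) {ι : Type} [Fintype ι]
    [DecidableEq ι] (P : ι → Prop) [DecidablePred P] (x : ι → ℚ_[p])
    (h : ∀ i, P i → ∀ j, ¬ P j → ψ ‖x i - x j‖ = 1) :
    KK ψ ι x = KK ψ {i // P i} (fun i => x i) * KK ψ {i // ¬ P i} (fun i => x i) := by
  unfold KK
  rw [← Fintype.prod_subtype_mul_prod_subtype P]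
  congr 1
  · refine Finset.prod_congr rfl (fun i _ => ?_)
    rw [← Fintype.prod_subtype_mul_prod_subtype P]
    rw [Finset.prod_eq_one (s := (Finset.univ : Finset {i // ¬ P i})), mul_one]
    · simp [Subtype.ext_iff]
    · intro j _
      rw [h i i.2 j j.2, ite_self]
  · refine Finset.prod_congr rfl (fun i _ => ?_)
    rw [← Fintype.prod_subtype_mul_prod_subtype P]
    rw [Finset.prod_eq_one (s := (Finset.univ : Finset {i // P i})), one_mul]
    · simp [Subtype.ext_iff]
    · intro j _
      rw [norm_sub_rev, h j j.2 i i.2, ite_self]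

lemma ZZ_union {𝕜 : Type*} [RCLike 𝕜] {p : ℕ} [Fact p.Prime] (μ : Measure ℚ_[p]) [SigmaFinite μ]
    (ψ : ℝ → 𝕜) (X Y : Set ℚ_[p]) (hX : MeasurableSet X) (hY : MeasurableSet Y)
    (hXf : μ X < ⊤) (hYf : μ Y < ⊤) (hd : Disjoint X Y)
    (hψ : ∀ x ∈ X, ∀ y ∈ Y, ψ ‖x - y‖ = 1) (n : ℕ)
    (hint : Integrable (KK ψ (Fin n)) (Measure.pi fun _ : Fin n => μ.restrict (X ∪ Y))) :
    ZZ (μ.restrict (X ∪ Y)) ψ (Fin n) = ∑ k ∈ Finset.range (n + 1), (n.choose k : 𝕜) *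
      (ZZ (μ.restrict X) ψ (Fin k) * ZZ (μ.restrict Y) ψ (Fin (n - k))) := by
  have : IsFiniteMeasure (μ.restrict X) := isFiniteMeasure_restrict.2 hXf.ne
  have : IsFiniteMeasure (μ.restrict Y) := isFiniteMeasure_restrict.2 hYf.ne
  unfold ZZ at *
  rw [Measure.restrict_union hd hY] at *
  rw [pi_add_measure] at *
  rw [integral_finsetSum_measure]
  swap
  · intro S _
    exact (integrable_finsetSum_measure.1 hint) S (Finset.mem_univ _)
  have key : ∀ (P : Fin n → Prop) [DecidablePred P], ∫ x, KK ψ (Fin n) x ∂(Measure.pi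
      (fun i => if P i then μ.restrict X else μ.restrict Y)) =
      ZZ (μ.restrict X) ψ (Fin (Fintype.card {i // P i})) * ZZ (μ.restrict Y) ψ (Fin (n - Fintype.card {i // P i})) := by
    intro P _
    have : ∀ i, IsFiniteMeasure (if P i then μ.restrict X else μ.restrict Y) := by
      intro i; split_ifs <;> infer_instance
    rw [← ZZ_card (μ.restrict X) ψ (ι := {i // P i}) _ rfl,
      ← ZZ_card (μ.restrict Y) ψ (ι := {i // ¬ P i}) (n - Fintype.card {i // P i}) (by
        rw [Fintype.card_subtype_compl]; simp)]
    unfold ZZ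
    rw [← integral_prod_mul]
    have hmp := measurePreserving_piEquivPiSubtypeProd
      (fun i => if P i then μ.restrict X else μ.restrict Y) (fun i => P i)
    have e1 : (fun i : {i // P i} => if P (i : Fin n) then μ.restrict X else μ.restrict Y)
        = fun _ => μ.restrict X := by
      ext1 i; simp [i.2]
    have e2 : (fun i : {i // ¬ P i} => if P (i : Fin n) then μ.restrict X else μ.restrict Y)
        = fun _ => μ.restrict Y := by
      ext1 i; simp [i.2]
    rw [e1, e2] at hmp
    rw [← hmp.integral_comp']
    have hae : ∀ i : Fin n, ∀ᵐ x ∂(Measure.pi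
      (fun i => if P i then μ.restrict X else μ.restrict Y)), (P i → x i ∈ X) ∧
        (¬ P i → x i ∈ Y) := by
      intro i
      have : ∀ᵐ y ∂(if P i then μ.restrict X else μ.restrict Y),  (P i → y ∈ X) ∧
        (¬ P i → y ∈ Y) := by
        by_cases hi : P i
        · simp only [hi, if_true, not_true_eq_false, false_imp_iff, true_imp_iff, and_true]
          exact ae_restrict_mem hX
        · simp only [hi, if_false, not_false_eq_true, false_imp_iff, true_imp_iff, true_and]
          exact ae_restrict_mem hY
      exact (Measure.quasiMeasurePreserving_eval
        (μ := fun i => if P i then μ.restrict X else μ.restrict Y) i).ae this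
    rw [← ae_all_iff] at hae
    refine integral_congr_ae ?_
    filter_upwards [hae] with x hx
    exact KK_split ψ P x (fun i hi j hj => hψ _ ((hx i).1 hi) _ ((hx j).2 hj))
  have key' : ∀ S : Finset (Fin n), ∫ x, KK ψ (Fin n) x ∂(Measure.pi
      (fun i => if i ∈ S then μ.restrict X else μ.restrict Y)) =
      ZZ (μ.restrict X) ψ (Fin S.card) * ZZ (μ.restrict Y) ψ (Fin (n - S.card)) := by
    intro S
    obtain ⟨c, hc⟩ : ∃ c, c = S.card := ⟨_, rfl⟩
    rw [← hc]
    rw [key (fun i => i ∈ S)]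
    have : c = @Fintype.card {i // i ∈ S} (Subtype.fintype _) := by
      rw [Fintype.card_subtype, hc]; simp
    rw [this]
  rw [Finset.sum_congr rfl (fun S _ => key' S)]
  rw [← Finset.powerset_univ, Finset.sum_powerset_apply_card (fun k =>
    ZZ (μ.restrict X) ψ (Fin k) * ZZ (μ.restrict Y) ψ (Fin (n - k)))]
  simp [ZZ]


def Cb (p : ℕ) [Fact p.Prime] (j : ℕ) : Set ℚ_[p] := {x | ‖x - (j : ℚ_[p])‖ < 1}
def XX (p : ℕ) [Fact p.Prime] (j : ℕ) : Set ℚ_[p] := {x | ∃ a < j, ‖x - (a : ℚ_[p])‖ < 1}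

lemma XX_zero (p : ℕ) [Fact p.Prime] : XX p 0 = ∅ := by
  ext x; simp [XX]

lemma XX_succ (p : ℕ) [Fact p.Prime] (j : ℕ) : XX p (j + 1) = XX p j ∪ Cb p j := by
  ext x
  simp only [XX, Cb, Set.mem_ofPred_eq, Set.mem_union]
  constructor
  · rintro ⟨a, ha, h⟩
    rcases Nat.lt_succ_iff_lt_or_eq.1 ha with h1 | rfl
    · exact Or.inl ⟨a, h1, h⟩
    · exact Or.inr h
  · rintro (⟨a, ha, h⟩ | h)
    · exact ⟨a, by omega, h⟩
    · exact ⟨j, by omega, h⟩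

lemma XX_subset (p : ℕ) [Fact p.Prime] (j : ℕ) : XX p j ⊆ Zball p := by
  rintro x ⟨a, _, h⟩
  have h2 : ‖((a : ℤ) : ℚ_[p])‖ ≤ 1 := Padic.norm_int_le_one a
  have h3 := Padic.nonarchimedean (x - (a : ℚ_[p])) (a : ℚ_[p])
  rw [sub_add_cancel] at h3
  refine h3.trans (max_le h.le (by simpa using h2))

lemma XX_p (p : ℕ) [Fact p.Prime] : XX p p = Zball p := by
  refine Set.Subset.antisymm (XX_subset p p) (fun x hx => ?_)
  have hx' : ‖x‖ ≤ 1 := hx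
  obtain ⟨y, rfl⟩ : ∃ y : ℤ_[p], (y : ℚ_[p]) = x := ⟨⟨x, hx'⟩, rfl⟩
  obtain ⟨n, hn, h⟩ := PadicInt.exists_mem_range y
  refine ⟨n, hn, ?_⟩
  rw [IsLocalRing.mem_maximalIdeal, mem_nonunits_iff, PadicInt.not_isUnit_iff] at h
  rw [PadicInt.norm_def, PadicInt.coe_sub, PadicInt.coe_natCast] at h
  exact h

lemma Cb_zero (p : ℕ) [Fact p.Prime] : Cb p 0 = Pball p := by
  ext x; simp [Cb, Pball]

lemma measurableSet_Cb (p : ℕ) [Fact p.Prime] (j : ℕ) : MeasurableSet (Cb p j) :=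
  measurableSet_lt (by fun_prop) (by fun_prop)

lemma measurableSet_Pball (p : ℕ) [Fact p.Prime] : MeasurableSet (Pball p) :=
  Cb_zero p ▸ measurableSet_Cb p 0

lemma measurableSet_XX (p : ℕ) [Fact p.Prime] (j : ℕ) : MeasurableSet (XX p j) := by
  induction j with
  | zero => rw [XX_zero]; exact MeasurableSet.empty
  | succ j ih => rw [XX_succ]; exact ih.union (measurableSet_Cb p j)

lemma measurableSet_Zball (p : ℕ) [Fact p.Prime] : MeasurableSet (Zball p) :=
  XX_p p ▸ measurableSet_XX p p

lemma cross (p : ℕ) [Fact p.Prime] (j : ℕ) (hj : j < p) (x : ℚ_[p]) (hx : x ∈ XX p j)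
    (y : ℚ_[p]) (hy : y ∈ Cb p j) : ‖x - y‖ = 1 := by
  obtain ⟨a, ha, hx⟩ := hx
  have h1 : ‖(((a : ℤ) - (j : ℤ) : ℤ) : ℚ_[p])‖ = 1 := by
    refine le_antisymm (Padic.norm_int_le_one _) (not_lt.1 fun h => ?_)
    have h : ‖(((a : ℤ) - (j : ℤ) : ℤ) : ℤ_[p])‖ < 1 := by
      rw [PadicInt.norm_def]; simpa using h
    rw [PadicInt.norm_int_lt_one_iff_dvd] at h
    have := Int.eq_zero_of_abs_lt_dvd h (by rw [abs_lt]; constructor <;> omega)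
    omega
  push_cast at h1
  have e : x - y = ((a : ℚ_[p]) - j) + ((x - a) - (y - j)) := by ring
  have h2 : ‖(x - a) - (y - j)‖ < 1 := by
    rw [sub_eq_add_neg]
    refine lt_of_le_of_lt (Padic.nonarchimedean _ _) (max_lt hx (by rw [norm_neg]; exact hy))
  rw [e, Padic.add_eq_max_of_ne (by rw [h1]; exact h2.ne'), h1, max_eq_left h2.le]

lemma XX_disj (p : ℕ) [Fact p.Prime] (j : ℕ) (hj : j < p) : Disjoint (XX p j) (Cb p j) := by
  rw [Set.disjoint_left]
  intro x hx hy
  have := cross p j hj x hx x hy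
  simp at this

lemma mp_Cb (p : ℕ) [Fact p.Prime] (μ : Measure ℚ_[p]) [μ.IsAddHaarMeasure] (j : ℕ) :
    MeasurePreserving (fun x => x + (j : ℚ_[p])) (μ.restrict (Pball p)) (μ.restrict (Cb p j)) := by
  have h := (measurePreserving_add_right μ (j : ℚ_[p])).restrict_preimage (measurableSet_Cb p j)
  convert h using 2
  ext x; simp [Pball, Cb]

lemma mu_Cb (p : ℕ) [Fact p.Prime] (μ : Measure ℚ_[p]) [μ.IsAddHaarMeasure] (j : ℕ) :
    μ (Cb p j) = μ (Pball p) := by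
  have h := (mp_Cb p μ j).measure_preimage MeasurableSet.univ.nullMeasurableSet
  simpa using h.symm

lemma mu_XX (p : ℕ) [Fact p.Prime] (μ : Measure ℚ_[p]) [μ.IsAddHaarMeasure] (j : ℕ) (hj : j ≤ p) :
    μ (XX p j) = j * μ (Pball p) := by
  induction j with
  | zero => simp [XX_zero]
  | succ j ih =>
    rw [XX_succ, measure_union (XX_disj p j hj) (measurableSet_Cb p j), ih (by omega), mu_Cb]
    push_cast; ring

lemma mp_scale (p : ℕ) [Fact p.Prime] (μ : Measure ℚ_[p]) [μ.IsAddHaarMeasure]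
    (hμ : μ (Zball p) = 1) :
    MeasurePreserving (fun x => (p : ℚ_[p]) * x) (μ.restrict (Zball p))
      ((p : NNReal) • μ.restrict (Pball p)) := by
  have hp0 : (p : ℚ_[p]) ≠ 0 := by exact_mod_cast (Fact.out : p.Prime).ne_zero
  have hpre : (fun x => (p : ℚ_[p]) * x) ⁻¹' (Pball p) = Zball p := by
    ext x
    simp only [Pball, Zball, Set.mem_preimage, Set.mem_ofPred_eq]
    have hp1 : (1 : ℝ) < p := by exact_mod_cast (Fact.out : p.Prime).one_lt
    have := Padic.norm_le_pow_iff_norm_lt_pow_add_one x 0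
    simp only [zpow_zero, zero_add, zpow_one] at this
    rw [this, norm_mul, Padic.norm_p, inv_mul_lt_iff₀ (by linarith), mul_one]
  have hmeas : Measurable (fun x => (p : ℚ_[p]) * x) := by fun_prop
  have hH : (Measure.map (fun x => (p : ℚ_[p]) * x) μ).IsAddHaarMeasure :=
    ({ Equiv.mulLeft₀ (p : ℚ_[p]) hp0 with map_add' := fun x y => mul_add _ x y } : ℚ_[p] ≃+ ℚ_[p]).isAddHaarMeasure_map μ (by
      change Continuous (fun x => (p : ℚ_[p]) * x); fun_prop) (by
      change Continuous (fun x => (p : ℚ_[p])⁻¹ * x); fun_prop)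
  have h := Measure.isAddLeftInvariant_eq_smul (Measure.map (fun x => (p : ℚ_[p]) * x) μ) μ
  set c := Measure.addHaarScalarFactor (Measure.map (fun x => (p : ℚ_[p]) * x) μ) μ
  have h1 : c * μ (Pball p) = 1 := by
    have h2 := congrArg (fun m => m (Pball p)) h
    simp only [Measure.map_apply hmeas (measurableSet_Pball p), hpre, hμ] at h2
    rw [h2]; rfl
  have h3 := mu_XX p μ p le_rfl
  rw [XX_p, hμ] at h3
  have hc : c = (p : NNReal) := by
    have hP : μ (Pball p) ≠ 0 := by
      intro h0; rw [h0, mul_zero] at h1; exact zero_ne_one h1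
    have hP' : μ (Pball p) ≠ ⊤ := by
      intro h0; rw [h0, ENNReal.mul_top (by exact_mod_cast (Fact.out : p.Prime).ne_zero)] at h3
      exact ENNReal.one_ne_top h3
    have : (c : ENNReal) = p := by
      have h4 : (c : ENNReal) * μ (Pball p) = p * μ (Pball p) := h1.trans h3
      exact (ENNReal.mul_left_inj hP hP').1 h4
    exact_mod_cast this
  have h5 : MeasurePreserving (fun x => (p : ℚ_[p]) * x) μ (c • μ) := ⟨hmeas, h⟩
  have h6 := h5.restrict_preimage (measurableSet_Pball p)
  rw [hpre, Measure.restrict_smul, hc] at h6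
  exact h6

lemma KK_measurable {𝕜 : Type*} [RCLike 𝕜] {p : ℕ} [Fact p.Prime] (ψ : ℝ → 𝕜) (hψ : Measurable ψ)
    (ι : Type) [Fintype ι] [DecidableEq ι] : Measurable (KK (p := p) ψ ι) := by
  unfold KK
  refine Finset.measurable_prod _ (fun i _ => Finset.measurable_prod _ (fun j _ => ?_))
  split_ifs
  · exact measurable_const
  · exact hψ.comp (by fun_prop)

lemma ZZ_mp {𝕜 : Type*} [RCLike 𝕜] {p : ℕ} [Fact p.Prime] (ψ : ℝ → 𝕜) (hψ : Measurable ψ)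
    (ν ν' : Measure ℚ_[p]) [SigmaFinite ν] [SigmaFinite ν'] (f : ℚ_[p] → ℚ_[p])
    (hf : MeasurePreserving f ν' ν) (n : ℕ) :
    ZZ ν ψ (Fin n) = ∫ x, KK ψ (Fin n) (fun i => f (x i)) ∂(Measure.pi fun _ : Fin n => ν') := by
  have h := measurePreserving_pi (fun _ : Fin n => ν') (fun _ => ν) (fun _ => hf)
  unfold ZZ
  rw [← h.map_eq, integral_map h.measurable.aemeasurable
    (KK_measurable ψ hψ _).aestronglyMeasurable]

lemma ZZ_Cb {𝕜 : Type*} [RCLike 𝕜] {p : ℕ} [Fact p.Prime] (ψ : ℝ → 𝕜) (hψ : Measurable ψ)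
    (μ : Measure ℚ_[p]) [SigmaFinite μ] [μ.IsAddHaarMeasure] (n j : ℕ) :
    ZZ (μ.restrict (Cb p j)) ψ (Fin n) = ZZ (μ.restrict (Pball p)) ψ (Fin n) := by
  rw [ZZ_mp ψ hψ _ _ _ (mp_Cb p μ j)]
  simp [ZZ, KK]

lemma ZZ_smul {𝕜 : Type*} [RCLike 𝕜] {p : ℕ} [Fact p.Prime] (ψ : ℝ → 𝕜)
    (ν : Measure ℚ_[p]) [SigmaFinite ν] (c : NNReal) (n : ℕ) :
    ZZ (c • ν) ψ (Fin n) = (((c : ℝ) : 𝕜) ^ n) * ZZ ν ψ (Fin n) := by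
  have : (Measure.pi fun _ : Fin n => c • ν) = (c ^ n) • Measure.pi fun _ : Fin n => ν := by
    refine Measure.pi_eq (fun s _ => ?_)
    rw [Measure.smul_apply, Measure.pi_pi]
    simp only [Measure.smul_apply, ENNReal.smul_def, smul_eq_mul, Finset.prod_mul_distrib]
    simp
  unfold ZZ
  rw [this, integral_smul_nnreal_measure]
  rw [NNReal.smul_def, RCLike.real_smul_eq_coe_mul]; simp

lemma KK_scale {𝕜 : Type*} [RCLike 𝕜] {p : ℕ} [Fact p.Prime] (ψ ψ' : ℝ → 𝕜) (c : 𝕜)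
    (h : ∀ r, 0 ≤ r → ψ ((p : ℝ)⁻¹ * r) = c * ψ' r) (n : ℕ) (x : Fin n → ℚ_[p]) :
    KK ψ (Fin n) (fun i => (p : ℚ_[p]) * x i) = c ^ (n * (n - 1)) * KK ψ' (Fin n) x := by
  unfold KK
  have : ∀ i j, (if i = j then (1 : 𝕜) else ψ ‖(p : ℚ_[p]) * x i - p * x j‖) =
      (if i = j then 1 else c) * (if i = j then 1 else ψ' ‖x i - x j‖) := by
    intro i j
    split_ifs
    · simp
    · rw [← mul_sub, norm_mul, Padic.norm_p, h _ (norm_nonneg _)]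
  simp only [this, Finset.prod_mul_distrib]
  congr 1
  have h2 : ∀ i : Fin n, (∏ j, if i = j then (1 : 𝕜) else c) = c ^ (n - 1) := by
    intro i
    rw [Finset.prod_ite]
    simp only [Finset.prod_const_one, one_mul, Finset.prod_const]
    congr 1
    rw [Finset.filter_not, Finset.card_sdiff]
    simp [Finset.filter_eq]
  simp [h2, ← pow_mul, mul_comm]

lemma ZZ_Pball {𝕜 : Type*} [RCLike 𝕜] {p : ℕ} [Fact p.Prime] (ψ ψ' : ℝ → 𝕜) (hψ : Measurable ψ)
    (μ : Measure ℚ_[p]) [SigmaFinite μ] [μ.IsAddHaarMeasure] (hμ : μ (Zball p) = 1) (c : 𝕜)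
    (h : ∀ r, 0 ≤ r → ψ ((p : ℝ)⁻¹ * r) = c * ψ' r) (n : ℕ) :
    (p : 𝕜) ^ n * ZZ (μ.restrict (Pball p)) ψ (Fin n) =
      c ^ (n * (n - 1)) * ZZ (μ.restrict (Zball p)) ψ' (Fin n) := by
  have h1 := ZZ_smul ψ (μ.restrict (Pball p)) (p : NNReal) n
  have h2 := ZZ_mp ψ hψ _ _ _ (mp_scale p μ hμ) n
  simp only [KK_scale ψ ψ' c h, integral_const_mul] at h2
  rw [h1] at h2
  simpa [ZZ] using h2

lemma ZZ_zero_one {𝕜 : Type*} [RCLike 𝕜] {p : ℕ} [Fact p.Prime] (ψ : ℝ → 𝕜)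
    (ν : Measure ℚ_[p]) [SigmaFinite ν] : ZZ ν ψ (Fin 0) = 1 := by
  unfold ZZ
  rw [Measure.pi_of_empty (fun _ : Fin 0 => ν) 0]
  simp [KK]

lemma ZZ_empty {𝕜 : Type*} [RCLike 𝕜] {p : ℕ} [Fact p.Prime] (ψ : ℝ → 𝕜)
    (n : ℕ) (hn : n ≠ 0) : ZZ (0 : Measure ℚ_[p]) ψ (Fin n) = 0 := by
  have : Nonempty (Fin n) := ⟨⟨0, by omega⟩⟩
  have h : (Measure.pi fun _ : Fin n => (0 : Measure ℚ_[p])) = 0 := by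
    rw [← Measure.measure_univ_eq_zero, Measure.pi_univ]
    simp [hn]
  simp [ZZ, h]


lemma ZZ_XX {𝕜 : Type*} [RCLike 𝕜] {p : ℕ} [Fact p.Prime] (ψ : ℝ → 𝕜) (hψ : Measurable ψ)
    (h1 : ψ 1 = 1)
    (μ : Measure ℚ_[p]) [SigmaFinite μ] [μ.IsAddHaarMeasure] (hμ : μ (Zball p) = 1) (N : ℕ)
    (hint : ∀ k ≤ N, Integrable (KK ψ (Fin k)) (Measure.pi fun _ : Fin k => μ.restrict (Zball p)))
    (j : ℕ) (hj : j ≤ p) (n : ℕ) (hn : n ≤ N) :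
    ZZ (μ.restrict (XX p j)) ψ (Fin n) / (n.factorial : 𝕜) =
      PowerSeries.coeff n
        ((PowerSeries.mk fun k => ZZ (μ.restrict (Pball p)) ψ (Fin k) / (k.factorial : 𝕜)) ^ j) := by
  induction j generalizing n with
  | zero =>
    rw [XX_zero, Measure.restrict_empty, pow_zero, PowerSeries.coeff_one]
    split_ifs with h
    · subst h; simp [ZZ_zero_one]
    · simp [ZZ_empty ψ n h]
  | succ j ih =>
    rw [pow_succ, PowerSeries.coeff_mul]
    have hfin : ∀ S ⊆ Zball p, μ S < ⊤ := fun S hS =>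
      (measure_mono hS).trans_lt (by rw [hμ]; exact ENNReal.one_lt_top)
    have hsub := XX_subset p (j + 1)
    have hI : Integrable (KK ψ (Fin n)) (Measure.pi fun _ : Fin n => μ.restrict (XX p (j + 1))) := by
      have h := hint n hn
      rw [← Measure.restrict_pi_pi] at h ⊢
      exact IntegrableOn.mono_set h (Set.pi_mono fun _ _ => hsub)
    rw [XX_succ] at hI hsub ⊢
    rw [ZZ_union μ ψ _ _ (measurableSet_XX p j) (measurableSet_Cb p j)
      (hfin _ (Set.subset_union_left.trans hsub)) (hfin _ (Set.subset_union_right.trans hsub))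
      (XX_disj p j hj) (fun x hx y hy => by rw [cross p j hj x hx y hy, h1]) n hI]
    rw [Finset.Nat.sum_antidiagonal_eq_sum_range_succ_mk, Finset.sum_div]
    refine Finset.sum_congr rfl (fun k hk => ?_)
    have hk' : k ≤ n := by simpa [Nat.lt_succ_iff] using hk
    rw [← ih (by omega) k (by omega), PowerSeries.coeff_mk, ZZ_Cb ψ hψ]
    rw [Nat.cast_choose 𝕜 hk']
    have a1 : (n.factorial : 𝕜) ≠ 0 := by exact_mod_cast n.factorial_ne_zero
    have a2 : (k.factorial : 𝕜) ≠ 0 := by exact_mod_cast k.factorial_ne_zero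
    have a3 : ((n - k).factorial : 𝕜) ≠ 0 := by exact_mod_cast (n - k).factorial_ne_zero
    field_simp

lemma ps_identity {𝕜 : Type*} [Field 𝕜] (a b : ℕ → 𝕜) (p n : ℕ) (hp : p ≠ 0)
    (h : ∀ k ≤ n, a k = PowerSeries.coeff k ((PowerSeries.mk b) ^ p)) :
    ∑ k ∈ Finset.range (n + 1), (k : 𝕜) * a k * b (n - k) =
      p * ∑ k ∈ Finset.range (n + 1), (k : 𝕜) * b k * a (n - k) := by
  rcases n with _ | n
  · simp
  set G := PowerSeries.mk b with hG
  have key : PowerSeries.derivative 𝕜 (G ^ p) * G =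
      (p : PowerSeries 𝕜) * (PowerSeries.derivative 𝕜 G * G ^ p) := by
    rw [Derivation.leibniz_pow]
    obtain ⟨q, rfl⟩ := Nat.exists_eq_succ_of_ne_zero hp
    simp only [nsmul_eq_mul, smul_eq_mul, Nat.succ_sub_one, Nat.succ_eq_add_one, Nat.add_sub_cancel]
    ring
  have h2 := congrArg (PowerSeries.coeff n) key
  rw [← map_natCast (PowerSeries.C (R := 𝕜)), PowerSeries.coeff_C_mul, PowerSeries.coeff_mul,
    PowerSeries.coeff_mul, Finset.Nat.sum_antidiagonal_eq_sum_range_succ_mk,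
    Finset.Nat.sum_antidiagonal_eq_sum_range_succ_mk] at h2
  rw [Finset.sum_range_succ', Finset.sum_range_succ' (n := n + 1)]
  simp only [Nat.cast_zero, zero_mul, add_zero, Nat.add_sub_add_right]
  convert h2 using 1
  · refine Finset.sum_congr rfl (fun k hk => ?_)
    have hk' : k ≤ n := by simpa [Nat.lt_succ_iff] using hk
    simp only [PowerSeries.coeff_derivative]
    rw [← h (k + 1) (by omega), hG, PowerSeries.coeff_mk]; push_cast; ring
  · congr 1
    refine Finset.sum_congr rfl (fun k hk => ?_)
    have hk' : k ≤ n := by simpa [Nat.lt_succ_iff] using hk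
    simp only [PowerSeries.coeff_derivative]
    rw [← h (n - k) (by omega), hG, PowerSeries.coeff_mk]; push_cast; ring

lemma main_rec {𝕜 : Type*} [RCLike 𝕜] {p : ℕ} [Fact p.Prime] (ψ ψ' : ℝ → 𝕜) (hψ : Measurable ψ)
    (h1 : ψ 1 = 1)
    (μ : Measure ℚ_[p]) [SigmaFinite μ] [μ.IsAddHaarMeasure] (hμ : μ (Zball p) = 1) (n : ℕ)
    (hint : ∀ k ≤ n, Integrable (KK ψ (Fin k)) (Measure.pi fun _ : Fin k => μ.restrict (Zball p)))
    (c : 𝕜) (hc : ∀ r, 0 ≤ r → ψ ((p : ℝ)⁻¹ * r) = c * ψ' r) (hn : 2 ≤ n)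
    (A A' R : ℕ → 𝕜) (hA : ∀ k, A k = ZZ (μ.restrict (Zball p)) ψ (Fin k) / (k.factorial : 𝕜))
    (hA' : ∀ k, A' k = ZZ (μ.restrict (Zball p)) ψ' (Fin k) / (k.factorial : 𝕜))
    (hR : ∀ k, R k = ((p : 𝕜)⁻¹) ^ k * c ^ (k * (k - 1))) :
    n * A n + ∑ k ∈ Finset.Icc 1 (n - 1), (k : 𝕜) * A k * (R (n - k) * A' (n - k)) =
      p * (n * (R n * A' n) + ∑ k ∈ Finset.Icc 1 (n - 1), (k : 𝕜) * (R k * A' k) * A (n - k)) := by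
  have hp0 : (p : 𝕜) ≠ 0 := by exact_mod_cast (Fact.out : p.Prime).ne_zero
  have hB : ∀ k, ZZ (μ.restrict (Pball p)) ψ (Fin k) / (k.factorial : 𝕜) = R k * A' k := by
    intro k
    have := ZZ_Pball ψ ψ' hψ μ hμ c hc k
    rw [hR, hA', inv_pow, ← mul_div_assoc, mul_assoc, ← this,
      inv_mul_cancel_left₀ (pow_ne_zero _ hp0)]
  have h := ps_identity A (fun k => R k * A' k) p n (Fact.out : p.Prime).ne_zero (by
    intro k hk
    rw [hA k, ← XX_p, ZZ_XX ψ hψ h1 μ hμ n hint p le_rfl k hk]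
    simp only [hB])
  have hA0 : A 0 = 1 := by rw [hA, ZZ_zero_one]; simp
  have hA0' : A' 0 = 1 := by rw [hA', ZZ_zero_one]; simp
  have hR0 : R 0 = 1 := by simp [hR]
  have hs : ∀ f : ℕ → 𝕜, f 0 = 0 → ∑ k ∈ Finset.range (n + 1), f k =
      f n + ∑ k ∈ Finset.Icc 1 (n - 1), f k := by
    intro f hf
    rw [Finset.sum_range_succ, add_comm]
    congr 1
    obtain ⟨m, rfl⟩ : ∃ m, n = m + 1 := ⟨n - 1, by omega⟩
    rw [Finset.range_eq_Ico, Finset.sum_eq_sum_Ico_succ_bot (by omega), hf, zero_add]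
    rfl
  rw [hs _ (by simp), hs _ (by simp)] at h
  simpa [hA0, hA0', hR0] using h


/-- truncated weights -/
noncomputable def psm (p : ℕ) (b : ℝ) (m : ℕ) (r : ℝ) : ℝ :=
  if r ≤ ((p : ℝ)⁻¹) ^ m then 0 else r ^ (b / 2)

lemma psm_measurable (p : ℕ) (b : ℝ) (m : ℕ) : Measurable (psm p b m) := by
  unfold psm
  exact Measurable.ite measurableSet_Iic measurable_const (by fun_prop)

lemma psm_nonneg (p : ℕ) (b : ℝ) (m : ℕ) (r : ℝ) : 0 ≤ psm p b m r := by
  unfold psm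
  split_ifs with h
  · exact le_rfl
  · exact Real.rpow_nonneg (le_trans (by positivity) (not_le.1 h).le) _

lemma psm_le (p : ℕ) (hp : p.Prime) (b : ℝ) (hb : b < 0) (m : ℕ) (r : ℝ) :
    psm p b m r ≤ (((p : ℝ)⁻¹) ^ m) ^ (b / 2) := by
  have hp0 : (0 : ℝ) < p := by exact_mod_cast hp.pos
  unfold psm
  split_ifs with h
  · positivity
  · exact Real.rpow_le_rpow_of_nonpos (by positivity) (not_le.1 h).le (by linarith)

lemma psm_scale (p : ℕ) (hp : p.Prime) (b : ℝ) (m : ℕ) (r : ℝ) (hr : 0 ≤ r) :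
    psm p b (m + 1) ((p : ℝ)⁻¹ * r) = ((p : ℝ)⁻¹) ^ (b / 2) * psm p b m r := by
  have hp0 : (0 : ℝ) < p := by exact_mod_cast hp.pos
  unfold psm
  have : (p : ℝ)⁻¹ * r ≤ (p : ℝ)⁻¹ ^ (m + 1) ↔ r ≤ (p : ℝ)⁻¹ ^ m := by
    rw [pow_succ', mul_le_mul_iff_right₀ (by positivity)]
  simp only [this]
  split_ifs
  · simp
  · rw [Real.mul_rpow (by positivity) hr]

lemma psm_one (p : ℕ) (hp : p.Prime) (b : ℝ) (m : ℕ) : psm p b (m + 1) 1 = 1 := by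
  have hp1 : (1 : ℝ) < p := by exact_mod_cast hp.one_lt
  unfold psm
  rw [if_neg, Real.one_rpow]
  exact not_le.2 (pow_lt_one₀ (by positivity) (inv_lt_one_of_one_lt₀ hp1) (by omega))

lemma psm_tendsto (p : ℕ) (hp : p.Prime) (b : ℝ) (hb : b < 0) (r : ℝ) (hr : 0 ≤ r) :
    Filter.Tendsto (fun m => psm p b m r) Filter.atTop (nhds (r ^ (b / 2))) := by
  have hp1 : (1 : ℝ) < p := by exact_mod_cast hp.one_lt
  refine tendsto_const_nhds.congr' ?_
  rcases hr.eq_or_lt with rfl | hr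
  · refine Filter.Eventually.of_forall (fun m => ?_)
    unfold psm
    beta_reduce
    rw [if_pos (by positivity), Real.zero_rpow (by linarith)]
  · have ht := tendsto_pow_atTop_nhds_zero_of_lt_one (r := (p : ℝ)⁻¹) (by positivity)
      (inv_lt_one_of_one_lt₀ hp1)
    filter_upwards [ht.eventually_lt_const hr] with m hm
    unfold psm
    rw [if_neg (not_le.2 hm)]

lemma KK_bdd {p : ℕ} [Fact p.Prime] (ψ : ℝ → ℝ) (h0 : ∀ r, 0 ≤ r → 0 ≤ ψ r) (n : ℕ) (C : ℝ)
    (hC : 1 ≤ C) (x : Fin n → ℚ_[p]) (h : ∀ i j, ψ ‖x i - x j‖ ≤ C) :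
    ‖KK ψ (Fin n) x‖ ≤ (C ^ n) ^ n := by
  unfold KK
  rw [norm_prod]
  have h1 : ∀ i : Fin n, ‖∏ j, (if i = j then (1 : ℝ) else ψ ‖x i - x j‖)‖ ≤ C ^ n := by
    intro i
    rw [norm_prod]
    refine (Finset.prod_le_prod (fun _ _ => norm_nonneg _) (g := fun _ => C) (fun j _ => ?_)).trans
      (by simp)
    split_ifs
    · simpa using hC
    · rw [Real.norm_of_nonneg (h0 _ (norm_nonneg _))]; exact h i j
  exact (Finset.prod_le_prod (fun _ _ => norm_nonneg _) (g := fun _ => C ^ n)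
    (fun j _ => h1 j)).trans (by simp)

lemma prob {p : ℕ} [Fact p.Prime] (μ : Measure ℚ_[p]) (hμ : μ (Zball p) = 1) :
    IsProbabilityMeasure (μ.restrict (Zball p)) := ⟨by simpa using hμ⟩

lemma psm_integrable {p : ℕ} [Fact p.Prime] (μ : Measure ℚ_[p]) (hμ : μ (Zball p) = 1) (b : ℝ)
    (hb : b < 0) (m n : ℕ) :
    Integrable (KK (psm p b m) (Fin n)) (Measure.pi fun _ : Fin n => μ.restrict (Zball p)) := by
  have := prob μ hμ
  have hp : p.Prime := Fact.out
  refine Integrable.of_bound (KK_measurable _ (psm_measurable p b m) _).aestronglyMeasurable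
    (((max 1 ((((p : ℝ)⁻¹) ^ m) ^ (b / 2))) ^ n) ^ n) (Filter.Eventually.of_forall fun x => ?_)
  exact KK_bdd _ (fun r _ => psm_nonneg p b m r) n _ (le_max_left _ _) x
    (fun i j => (psm_le p hp b hb m _).trans (le_max_right _ _))

lemma ZZ_one {𝕜 : Type*} [RCLike 𝕜] {p : ℕ} [Fact p.Prime] (μ : Measure ℚ_[p])
    (hμ : μ (Zball p) = 1) (ψ : ℝ → 𝕜) :
    ZZ (μ.restrict (Zball p)) ψ (Fin 1) = 1 := by
  have := prob μ hμ
  have h : KK (p := p) ψ (Fin 1) = fun _ => 1 := by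
    ext x; simp [KK]
  simp [ZZ, h]

lemma psm_bound {p : ℕ} [Fact p.Prime] (μ : Measure ℚ_[p]) [SigmaFinite μ] [μ.IsAddHaarMeasure]
    (hμ : μ (Zball p) = 1) (b : ℝ) (hb : b < 0) (N : ℕ) (hbN : -2 / (N : ℝ) < b) (n : ℕ)
    (hn : n ≤ N) :
    ∃ C : ℝ, ∀ m, ZZ (μ.restrict (Zball p)) (psm p b m) (Fin n) / (n.factorial : ℝ) ≤ C := by
  have hp : p.Prime := Fact.out
  have hp1 : (1 : ℝ) < p := by exact_mod_cast hp.one_lt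
  induction n using Nat.strong_induction_on with
  | _ n ih =>
  rcases Nat.lt_or_ge n 2 with h2 | h2
  · refine ⟨1, fun m => ?_⟩
    interval_cases n
    · simp [ZZ_zero_one]
    · simp [ZZ_one μ hμ]
  set A : ℕ → ℕ → ℝ := fun m k =>
    ZZ (μ.restrict (Zball p)) (psm p b m) (Fin k) / (k.factorial : ℝ) with hA
  have hA0 : ∀ m k, 0 ≤ A m k := by
    intro m k
    refine div_nonneg (integral_nonneg fun x => ?_) (by positivity)
    refine Finset.prod_nonneg fun i _ => Finset.prod_nonneg fun j _ => ?_
    split_ifs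
    · exact zero_le_one
    · exact psm_nonneg _ _ _ _
  set R : ℕ → ℝ := fun k => ((p : ℝ)⁻¹) ^ k * (((p : ℝ)⁻¹) ^ (b / 2)) ^ (k * (k - 1)) with hR
  have hR0 : ∀ k, 0 ≤ R k := fun k => by positivity
  have hex : ∀ k, ∃ C : ℝ, k < n → ∀ m, A m k ≤ C := by
    intro k
    by_cases hk : k < n
    · obtain ⟨C, hC⟩ := ih k hk (by omega)
      exact ⟨C, fun _ => hC⟩
    · exact ⟨0, fun h => absurd h hk⟩
  choose C hC using hex
  have hn0 : (0 : ℝ) < n := by exact_mod_cast (by omega : 0 < n)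
  set ρ : ℝ := p * R n with hρ
  have hρ0 : 0 ≤ ρ := mul_nonneg (by positivity) (hR0 n)
  have hρ1 : ρ < 1 := by
    have hN0 : (0 : ℝ) < N := by exact_mod_cast (by omega : 0 < N)
    have hnN : (n : ℝ) ≤ N := by exact_mod_cast hn
    have hb2 : -2 < b * n := by
      rw [div_lt_iff₀ hN0] at hbN
      nlinarith
    have hn2 : (2 : ℝ) ≤ n := by exact_mod_cast h2
    have : ρ = (p : ℝ) ^ (-(((n : ℝ) - 1) * (1 + b * n / 2))) := by
      have hp0 : (0 : ℝ) < p := by linarith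
      rw [hρ, hR]
      simp only
      rw [← Real.rpow_natCast, ← Real.rpow_natCast, ← Real.rpow_mul (by positivity),
        Real.inv_rpow hp0.le, Real.inv_rpow hp0.le, ← Real.rpow_neg hp0.le, ← Real.rpow_neg hp0.le,
        ← Real.rpow_add hp0]
      nth_rewrite 1 [← Real.rpow_one (p : ℝ)]
      rw [← Real.rpow_add hp0]
      congr 1
      push_cast [Nat.cast_sub (by omega : 1 ≤ n)]
      ring
    rw [this]
    refine Real.rpow_lt_one_of_one_lt_of_neg hp1 ?_
    have : 0 < ((n : ℝ) - 1) * (1 + b * n / 2) := by apply mul_pos <;> linarith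
    linarith
  set D : ℝ := p * ∑ k ∈ Finset.Icc 1 (n - 1), (k : ℝ) * (R k * C k) * C (n - k) with hD
  have hstep : ∀ m, n * A (m + 1) n ≤ ρ * (n * A m n) + D := by
    intro m
    have h := main_rec (psm p b (m + 1)) (psm p b m) (psm_measurable p b (m + 1))
      (psm_one p hp b m) μ hμ n (fun k _ => psm_integrable μ hμ b hb (m + 1) k)
      (((p : ℝ)⁻¹) ^ (b / 2)) (fun r hr => psm_scale p hp b m r hr) h2
      (A (m + 1)) (A m) R (fun _ => rfl) (fun _ => rfl) (fun _ => rfl)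
    have h3 : 0 ≤ ∑ k ∈ Finset.Icc 1 (n - 1), (k : ℝ) * A (m + 1) k * (R (n - k) * A m (n - k)) :=
      Finset.sum_nonneg fun k _ => mul_nonneg (mul_nonneg (by positivity) (hA0 _ _))
        (mul_nonneg (hR0 _) (hA0 _ _))
    have h4 : ∑ k ∈ Finset.Icc 1 (n - 1), (k : ℝ) * (R k * A m k) * A (m + 1) (n - k) ≤
        ∑ k ∈ Finset.Icc 1 (n - 1), (k : ℝ) * (R k * C k) * C (n - k) := by
      refine Finset.sum_le_sum fun k hk => ?_
      rw [Finset.mem_Icc] at hk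
      have a1 := hC k (by omega) m
      have a2 := hC (n - k) (by omega) (m + 1)
      have a3 := (hA0 m k).trans a1
      exact mul_le_mul (mul_le_mul_of_nonneg_left (mul_le_mul_of_nonneg_left a1 (hR0 _))
        (by positivity)) a2 (hA0 _ _) (mul_nonneg (by positivity) (mul_nonneg (hR0 _) a3))
    have h5 := mul_le_mul_of_nonneg_left h4 (by positivity : (0 : ℝ) ≤ p)
    rw [hD, hρ]
    linarith
  set K : ℝ := max (n * A 0 n) (D / (1 - ρ)) with hK
  have hKD : ρ * K + D ≤ K := by
    have : D / (1 - ρ) ≤ K := le_max_right _ _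
    rw [div_le_iff₀ (by linarith)] at this
    linarith
  have hall : ∀ m, n * A m n ≤ K := by
    intro m
    induction m with
    | zero => exact le_max_left _ _
    | succ m ihm =>
      have := mul_le_mul_of_nonneg_left ihm hρ0
      linarith [hstep m]
  refine ⟨K / n, fun m => ?_⟩
  rw [le_div_iff₀ hn0, mul_comm]
  exact hall m

lemma real_integrable {p : ℕ} [Fact p.Prime] (μ : Measure ℚ_[p]) [SigmaFinite μ]
    [μ.IsAddHaarMeasure]
    (hμ : μ (Zball p) = 1) (b : ℝ) (N : ℕ) (hbN : -2 / (N : ℝ) < b) (n : ℕ)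
    (hn : n ≤ N) :
    Integrable (KK (fun r : ℝ => r ^ (b / 2)) (Fin n))
      (Measure.pi fun _ : Fin n => μ.restrict (Zball p)) := by
  have hpr := prob μ hμ
  have hp : p.Prime := Fact.out
  have hmeas : Measurable (fun r : ℝ => r ^ (b / 2)) := by fun_prop
  rcases lt_or_ge b 0 with hb | hb
  · refine ⟨(KK_measurable _ hmeas _).aestronglyMeasurable, ?_⟩
    obtain ⟨C, hC⟩ := psm_bound μ hμ b hb N hbN n hn
    have ht : ∀ᵐ x ∂(Measure.pi fun _ : Fin n => μ.restrict (Zball p)),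
        Filter.Tendsto (fun m => KK (psm p b m) (Fin n) x) Filter.atTop
          (nhds (KK (fun r : ℝ => r ^ (b / 2)) (Fin n) x)) := by
      refine Filter.Eventually.of_forall fun x => ?_
      unfold KK
      refine tendsto_finsetProd _ fun i _ => tendsto_finsetProd _ fun j _ => ?_
      split_ifs
      · exact tendsto_const_nhds
      · exact psm_tendsto p hp b hb _ (norm_nonneg _)
    have hF : (∫⁻ x, ‖KK (fun r : ℝ => r ^ (b / 2)) (Fin n) x‖ₑ
          ∂(Measure.pi fun _ : Fin n => μ.restrict (Zball p))) ≤
        Filter.liminf (fun m => ∫⁻ x, ‖KK (psm p b m) (Fin n) x‖ₑ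
          ∂(Measure.pi fun _ : Fin n => μ.restrict (Zball p))) Filter.atTop := by
      refine le_trans (le_of_eq ?_) (lintegral_liminf_le' (fun m =>
        (KK_measurable (p := p) _ (psm_measurable p b m) (Fin n)).enorm.aemeasurable))
      refine lintegral_congr_ae ?_
      filter_upwards [ht] with x hx using hx.enorm.liminf_eq.symm
    refine lt_of_le_of_lt hF (lt_of_le_of_lt (b := ENNReal.ofReal (C * n.factorial)) ?_
      ENNReal.ofReal_lt_top)
    refine Filter.liminf_le_of_frequently_le' (Filter.Frequently.of_forall fun m => ?_)
    rw [← ofReal_integral_norm_eq_lintegral_enorm (psm_integrable μ hμ b hb m n)]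
    refine ENNReal.ofReal_le_ofReal ?_
    have h := hC m
    rw [div_le_iff₀ (by positivity)] at h
    refine le_trans (le_of_eq ?_) h
    unfold ZZ
    congr 1; ext x
    refine Real.norm_of_nonneg ?_
    refine Finset.prod_nonneg fun i _ => Finset.prod_nonneg fun j _ => ?_
    split_ifs
    · exact zero_le_one
    · exact psm_nonneg _ _ _ _
  · have hae : ∀ i : Fin n, ∀ᵐ x ∂(Measure.pi fun _ : Fin n => μ.restrict (Zball p)),
        x i ∈ Zball p := fun i =>
      (Measure.quasiMeasurePreserving_eval (μ := fun _ : Fin n => μ.restrict (Zball p)) i).ae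
        (ae_restrict_mem (measurableSet_Zball p))
    rw [← ae_all_iff] at hae
    refine Integrable.of_bound (KK_measurable _ hmeas _).aestronglyMeasurable ((1 ^ n) ^ n) ?_
    filter_upwards [hae] with x hx
    refine KK_bdd _ (fun r hr => Real.rpow_nonneg hr _) n 1 le_rfl x (fun i j => ?_)
    refine Real.rpow_le_one (norm_nonneg _) ?_ (by linarith)
    rw [sub_eq_add_neg]
    refine (Padic.nonarchimedean _ _).trans (max_le (hx i) ?_)
    rw [norm_neg]; exact hx j

lemma norm_psi_le (β : ℂ) (r : ℝ) (hr : 0 ≤ r) : ‖(r : ℂ) ^ (β / 2)‖ ≤ r ^ (β.re / 2) := by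
  rcases hr.eq_or_lt with rfl | hr
  · by_cases h : β = 0
    · simp [h]
    · rw [Complex.ofReal_zero, Complex.zero_cpow (div_ne_zero h two_ne_zero), norm_zero]
      exact Real.rpow_nonneg le_rfl _
  · rw [Complex.norm_cpow_eq_rpow_re_of_pos hr]; simp

lemma complex_integrable {p : ℕ} [Fact p.Prime] (μ : Measure ℚ_[p]) [SigmaFinite μ]
    [μ.IsAddHaarMeasure]
    (hμ : μ (Zball p) = 1) (β : ℂ) (N : ℕ) (hbN : -2 / (N : ℝ) < β.re) (n : ℕ)
    (hn : n ≤ N) :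
    Integrable (KK (fun r : ℝ => (r : ℂ) ^ (β / 2)) (Fin n))
      (Measure.pi fun _ : Fin n => μ.restrict (Zball p)) := by
  have hmeas : Measurable (fun r : ℝ => (r : ℂ) ^ (β / 2)) := by fun_prop
  refine (real_integrable μ hμ β.re N hbN n hn).mono'
    (KK_measurable _ hmeas _).aestronglyMeasurable (Filter.Eventually.of_forall fun x => ?_)
  unfold KK
  rw [norm_prod]
  refine Finset.prod_le_prod (fun _ _ => norm_nonneg _) fun i _ => ?_
  rw [norm_prod]
  refine Finset.prod_le_prod (fun _ _ => norm_nonneg _) fun j _ => ?_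
  split_ifs
  · simp
  · exact norm_psi_le β _ (norm_nonneg _)

lemma KK_eq_pairs {p : ℕ} [Fact p.Prime] (β : ℂ) (n : ℕ) (x : Fin n → ℚ_[p]) :
    KK (fun r : ℝ => (r : ℂ) ^ (β / 2)) (Fin n) x =
      ∏ q ∈ pairs n, (‖x q.1 - x q.2‖ : ℂ) ^ β := by
  set k : Fin n × Fin n → ℂ := fun q => (‖x q.1 - x q.2‖ : ℂ) ^ (β / 2) with hk
  have hsq : ∀ q : Fin n × Fin n, (‖x q.1 - x q.2‖ : ℂ) ^ β = k q * k q := by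
    intro q
    simp only [hk]
    by_cases h : (‖x q.1 - x q.2‖ : ℂ) = 0
    · rw [h]
      by_cases hβ : β = 0
      · simp [hβ]
      · rw [Complex.zero_cpow hβ, Complex.zero_cpow (div_ne_zero hβ two_ne_zero), mul_zero]
    · rw [← Complex.cpow_add _ _ h, add_halves]
  simp only [hsq]
  rw [Finset.prod_mul_distrib]
  unfold KK
  rw [← Finset.prod_product', Finset.univ_product_univ]
  have e : ∀ q : Fin n × Fin n, (if q.1 = q.2 then (1 : ℂ) else ((‖x q.1 - x q.2‖ : ℝ) : ℂ) ^ (β / 2)) =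
      (if q.1 < q.2 then k q else 1) * (if q.2 < q.1 then k q else 1) := by
    intro q
    rcases lt_trichotomy q.1 q.2 with h | h | h
    · simp [h, h.ne, h.not_gt, hk]
    · simp [h]
    · simp [h, h.ne', h.not_gt, hk]
  simp only [e]
  rw [Finset.prod_mul_distrib]
  unfold pairs
  rw [Finset.prod_filter]
  congr 1
  rw [← (Equiv.prodComm (Fin n) (Fin n)).prod_comp]
  refine Finset.prod_congr rfl fun q _ => ?_
  simp [hk, norm_sub_rev]

lemma ZN_eq {p : ℕ} [Fact p.Prime] (μ : Measure ℚ_[p]) [SigmaFinite μ] (β : ℂ) (n : ℕ) :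
    ZN p μ (Zball p) n β = ZZ (μ.restrict (Zball p)) (fun r : ℝ => (r : ℂ) ^ (β / 2)) (Fin n) := by
  unfold ZN ZZ
  simp only [KK_eq_pairs]


lemma final_alg (L : ℝ) (hL : 0 < L) (N : ℕ) (hN : 2 ≤ N) (β : ℂ)
    (hβ : -2 / (N : ℝ) < β.re) (A : ℕ → ℂ)
    (h : (N : ℂ) * A N + ∑ k ∈ Finset.Icc 1 (N - 1), (k : ℂ) * A k *
        (Complex.exp (-L * (((N - k : ℕ) : ℂ) + ((N - k).choose 2 : ℂ) * β)) * A (N - k)) =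
      Complex.exp L * ((N : ℂ) * (Complex.exp (-L * ((N : ℂ) + (N.choose 2 : ℂ) * β)) * A N) +
        ∑ k ∈ Finset.Icc 1 (N - 1), (k : ℂ) *
          (Complex.exp (-L * ((k : ℂ) + (k.choose 2 : ℂ) * β)) * A k) * A (N - k))) :
    A N / Complex.exp (L * ((N.choose 2 : ℂ) * β / 2)) =
      ∑ k ∈ Finset.Icc 1 (N - 1), ((k : ℂ) / (N : ℂ)) *
        (Complex.sinh (((L : ℂ) / 2) *
            (((N : ℂ) + (N.choose 2 : ℂ) * β) * (1 - 2 * (k : ℂ) / (N : ℂ)) + 1)) /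
          Complex.sinh (((L : ℂ) / 2) * (((N : ℂ) + (N.choose 2 : ℂ) * β) - 1))) *
        (A (N - k) / Complex.exp (L * (((N - k).choose 2 : ℂ) * β / 2))) *
        (A k / Complex.exp (L * ((k.choose 2 : ℂ) * β / 2))) := by
  have hN0 : (N : ℂ) ≠ 0 := by exact_mod_cast (by omega : N ≠ 0)
  set E : ℂ := (N : ℂ) + (N.choose 2 : ℂ) * β with hE
  set S : ℂ := Complex.sinh (((L : ℂ) / 2) * (E - 1)) with hS
  have hsinh : ∀ z : ℂ, 2 * Complex.sinh z = Complex.exp z - Complex.exp (-z) :=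
    fun z => Complex.two_sinh z
  have hEre : 0 < (E - 1).re := by
    have hN2 : (2 : ℝ) ≤ N := by exact_mod_cast hN
    rw [div_lt_iff₀ (by linarith)] at hβ
    have hc : ((N.choose 2 : ℂ)) = (((N : ℝ) * (N - 1) / 2 : ℝ) : ℂ) := by
      rw [← Nat.cast_choose_two ℝ N]; simp
    rw [hE, hc]
    simp only [Complex.sub_re, Complex.add_re, Complex.natCast_re, Complex.re_ofReal_mul,
      Complex.one_re]
    nlinarith
  have hS0 : S ≠ 0 := by
    intro h0
    have h1 := hsinh (((L : ℂ) / 2) * (E - 1))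
    rw [← hS, h0, mul_zero] at h1
    have h2 := congrArg norm (sub_eq_zero.1 h1.symm)
    rw [Complex.norm_exp, Complex.norm_exp, Real.exp_eq_exp, Complex.neg_re] at h2
    have h3 : (((L : ℂ) / 2) * (E - 1)).re = L / 2 * (E - 1).re := by
      rw [← Complex.re_ofReal_mul]; push_cast; rfl
    rw [h3] at h2
    have : 0 < L / 2 * (E - 1).re := by positivity
    linarith
  set X : ℂ := Complex.exp (-(((L : ℂ) / 2) * (E - 1))) with hX
  have hX0 : X ≠ 0 := Complex.exp_ne_zero _
  have e1 : 1 - Complex.exp L * Complex.exp (-L * E) = 2 * S * X := by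
    rw [hS, hsinh, hX, sub_mul, ← Complex.exp_add, ← Complex.exp_add, ← Complex.exp_add,
      add_neg_cancel, Complex.exp_zero]
    congr 2; ring
  have e2 : ∀ k ∈ Finset.Icc 1 (N - 1),
      Complex.exp L * Complex.exp (-L * ((k : ℂ) + (k.choose 2 : ℂ) * β)) -
        Complex.exp (-L * (((N - k : ℕ) : ℂ) + ((N - k).choose 2 : ℂ) * β)) =
      2 * Complex.sinh (((L : ℂ) / 2) * (E * (1 - 2 * (k : ℂ) / (N : ℂ)) + 1)) * X *
        Complex.exp (L * ((N.choose 2 : ℂ) * β / 2)) /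
        Complex.exp (L * (((N - k).choose 2 : ℂ) * β / 2)) /
        Complex.exp (L * ((k.choose 2 : ℂ) * β / 2)) := by
    intro k hk
    rw [Finset.mem_Icc] at hk
    have hkN : k ≤ N := by omega
    rw [hsinh, hX, sub_mul, sub_mul, sub_div, sub_div]
    simp only [← Complex.exp_add, ← Complex.exp_sub]
    rw [hE]
    simp only [Nat.cast_choose_two, Nat.cast_sub hkN]
    congr 2
    · field_simp
      ring
    · field_simp
      ring
  have h4 : (N : ℂ) * A N * (2 * S * X) = ∑ k ∈ Finset.Icc 1 (N - 1), (k : ℂ) * A k * A (N - k) *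
      (2 * Complex.sinh (((L : ℂ) / 2) * (E * (1 - 2 * (k : ℂ) / (N : ℂ)) + 1)) * X *
        Complex.exp (L * ((N.choose 2 : ℂ) * β / 2)) /
        Complex.exp (L * (((N - k).choose 2 : ℂ) * β / 2)) /
        Complex.exp (L * ((k.choose 2 : ℂ) * β / 2))) := by
    rw [← e1, Finset.sum_congr rfl (fun k hk => by rw [← e2 k hk])]
    have h5 : ∀ a b c d e : ℂ, a + b = c * (d + e) → a - c * d = c * e - b := by
      intro a b c d e h; linear_combination h
    have h6 := h5 _ _ _ _ _ h
    rw [Finset.mul_sum, ← Finset.sum_sub_distrib] at h6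
    refine Eq.trans (by ring) (h6.trans (Finset.sum_congr rfl fun k _ => by ring))
  have h7 : A N / Complex.exp (L * ((N.choose 2 : ℂ) * β / 2)) =
      ((N : ℂ) * A N * (2 * S * X)) /
        ((N : ℂ) * (2 * S * X) * Complex.exp (L * ((N.choose 2 : ℂ) * β / 2))) := by
    have := Complex.exp_ne_zero (L * ((N.choose 2 : ℂ) * β / 2))
    field_simp
  rw [h7, h4, Finset.sum_div]
  refine Finset.sum_congr rfl fun k _ => ?_
  have i1 := Complex.exp_ne_zero (L * ((N.choose 2 : ℂ) * β / 2))
  have i2 := Complex.exp_ne_zero (L * (((N - k).choose 2 : ℂ) * β / 2))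
  have i3 := Complex.exp_ne_zero (L * ((k.choose 2 : ℂ) * β / 2))
  generalize Complex.exp (L * ((N.choose 2 : ℂ) * β / 2)) = a at *
  generalize Complex.exp (L * (((N - k).choose 2 : ℂ) * β / 2)) = b at *
  generalize Complex.exp (L * ((k.choose 2 : ℂ) * β / 2)) = c at *
  generalize Complex.sinh (((L : ℂ) / 2) * (E * (1 - 2 * (k : ℂ) / (N : ℂ)) + 1)) = d at *
  field_simp


theorem statement_15 (p : ℕ) [Fact p.Prime]
    (μ : Measure ℚ_[p]) [SigmaFinite μ] [μ.IsAddHaarMeasure] (hμ : μ (Zball p) = 1)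
    (N : ℕ) (hN : 2 ≤ N) (β : ℂ) (hβ : -2 / (N : ℝ) < β.re) :
    (∀ k ≤ N, Integrable
        (fun x : Fin k → ℚ_[p] => ∏ q ∈ pairs k, (‖x q.1 - x q.2‖ : ℂ) ^ β)
        (Measure.pi fun _ => μ.restrict (Zball p))) ∧
    ZN p μ (Zball p) N β / ((N.factorial : ℂ) * (p : ℂ) ^ ((N.choose 2 : ℂ) * β / 2)) =
      ∑ k ∈ Finset.Icc 1 (N - 1), ((k : ℂ) / (N : ℂ)) *
        (Complex.sinh (((Real.log p : ℂ) / 2) *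
            (((N : ℂ) + (N.choose 2 : ℂ) * β) * (1 - 2 * (k : ℂ) / (N : ℂ)) + 1)) /
          Complex.sinh (((Real.log p : ℂ) / 2) * (((N : ℂ) + (N.choose 2 : ℂ) * β) - 1))) *
        (ZN p μ (Zball p) (N - k) β /
          (((N - k).factorial : ℂ) * (p : ℂ) ^ (((N - k).choose 2 : ℂ) * β / 2))) *
        (ZN p μ (Zball p) k β /
          ((k.factorial : ℂ) * (p : ℂ) ^ ((k.choose 2 : ℂ) * β / 2))) := by
  have hp : p.Prime := Fact.out
  have hp0 : (0 : ℝ) < p := by exact_mod_cast hp.pos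
  have hpc : (p : ℂ) ≠ 0 := by exact_mod_cast hp.ne_zero
  have hL : 0 < Real.log p := Real.log_pos (by exact_mod_cast hp.one_lt)
  have hlog : Complex.log (p : ℂ) = (Real.log p : ℂ) := by
    rw [Complex.ofReal_log hp0.le]; simp
  have hexp : Complex.exp (Real.log p : ℂ) = (p : ℂ) := by
    rw [← hlog, Complex.exp_log hpc]
  have hpow : ∀ z : ℂ, (p : ℂ) ^ z = Complex.exp ((Real.log p : ℂ) * z) := by
    intro z
    rw [Complex.cpow_def_of_ne_zero hpc, hlog]
  have hint := complex_integrable μ hμ β N hβ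
  refine ⟨fun k hk => ?_, ?_⟩
  · have h := hint k hk
    have e := funext (fun x => KK_eq_pairs (p := p) β k x)
    rw [e] at h
    exact h
  have hmeas : Measurable (fun r : ℝ => (r : ℂ) ^ (β / 2)) := by fun_prop
  have hcexp : ((((p : ℝ)⁻¹ : ℝ)) : ℂ) ^ (β / 2) = Complex.exp (-(Real.log p : ℂ) * (β / 2)) := by
    have hi : ((((p : ℝ)⁻¹ : ℝ)) : ℂ) ≠ 0 := by
      exact_mod_cast inv_ne_zero hp0.ne'
    rw [Complex.cpow_def_of_ne_zero hi, ← Complex.ofReal_log (by positivity), Real.log_inv]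
    push_cast; rfl
  have hrec := main_rec (𝕜 := ℂ) (fun r : ℝ => (r : ℂ) ^ (β / 2)) (fun r : ℝ => (r : ℂ) ^ (β / 2))
    hmeas (by simp) μ hμ N hint (((((p : ℝ)⁻¹ : ℝ)) : ℂ) ^ (β / 2))
    (by
      intro r hr
      beta_reduce
      rw [Complex.ofReal_mul, Complex.mul_cpow_ofReal_nonneg (by positivity) hr])
    hN (fun k => ZN p μ (Zball p) k β / (k.factorial : ℂ))
    (fun k => ZN p μ (Zball p) k β / (k.factorial : ℂ))
    (fun k => Complex.exp (-(Real.log p : ℂ) * ((k : ℂ) + (k.choose 2 : ℂ) * β)))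
    (fun k => by rw [ZN_eq]) (fun k => by rw [ZN_eq])
    (by
      intro k
      beta_reduce
      rw [hcexp, ← hexp, ← Complex.exp_neg, ← Complex.exp_nat_mul, ← Complex.exp_nat_mul,
        ← Complex.exp_add, Nat.cast_choose_two]
      congr 1
      rcases k with _ | k
      · simp
      · push_cast [Nat.add_sub_cancel]
        ring)
  rw [← hexp] at hrec
  have hfin := final_alg (Real.log p) hL N hN β hβ
    (fun k => ZN p μ (Zball p) k β / (k.factorial : ℂ)) hrec
  simp only [hpow]
  simp only [div_div] at hfin ⊢
  exact hfin

end LogCoulomb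
end
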